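/- arXiv:2309.05155 — 9 statements merged into one kernel-verified Lean document; each statement's English description precedes it below -/
import Mathlib

section
/- Let ℓ : ℕ → ℕ and q : ℕ → ℝ satisfy q(n) · 2^{ℓ(n)} > n + 1 for all n ∈ ℕ. Let (μ_t)_{t∈ℕ} be a countable family, where each μ_t assigns to every n ∈ ℕ a subprobability distribution μ_{t,n} on {0,1}^{ℓ(n)}. Then there exists an ℓ-sequence (s_n)_{n∈ℕ} such that for every t ∈ ℕ and every n ≥ t, μ_{t,n}(s_n) < q(n). -/
/-- Diagonalization against a countable family of subprobability
distributions: there is an `ℓ`-sequence `s` such that `μ t n (s n) < q n`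
whenever `n ≥ t`. -/
theorem exists_ingenerable_sequence (ℓ : ℕ → ℕ) (q : ℕ → ℝ)
    (h : ∀ n : ℕ, (n : ℝ) + 1 < q n * 2 ^ ℓ n)
    (μ : ℕ → ∀ n : ℕ, (Fin (ℓ n) → Bool) → ℝ)
    (hnn : ∀ t n x, 0 ≤ μ t n x)
    (hsum : ∀ t n, ∑ x : Fin (ℓ n) → Bool, μ t n x ≤ 1) :
    ∃ s : ∀ n : ℕ, Fin (ℓ n) → Bool, ∀ t n : ℕ, t ≤ n → μ t n (s n) < q n := by
  have key : ∀ n : ℕ, ∃ x : Fin (ℓ n) → Bool,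
      ∑ t ∈ Finset.range (n + 1), μ t n x < q n := by
    intro n
    have h1 : ∑ x : Fin (ℓ n) → Bool, ∑ t ∈ Finset.range (n + 1), μ t n x
        < ∑ _x : Fin (ℓ n) → Bool, q n := by
      rw [Finset.sum_comm]
      have h2 : ∑ t ∈ Finset.range (n + 1), ∑ x : Fin (ℓ n) → Bool, μ t n x
          ≤ ∑ _t ∈ Finset.range (n + 1), (1 : ℝ) :=
        Finset.sum_le_sum fun t _ => hsum t n
      have h3 := h n
      simp at h2 ⊢
      linarith
    obtain ⟨x, _, hx⟩ := Finset.exists_lt_of_sum_lt h1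
    exact ⟨x, hx⟩
  choose s hs using key
  refine ⟨s, fun t n htn => lt_of_le_of_lt ?_ (hs n)⟩
  exact Finset.single_le_sum (f := fun t => μ t n (s n)) (fun i _ => hnn i n (s n))
    (Finset.mem_range.mpr (by omega))
end

section
/- Let 𝒳 be a finite set, let p : 𝒳 → [0,1], and let s ∈ 𝒳. For each subset Y ⊆ 𝒳 let Pr[Y] = (∏_{x∈Y} p(x)) · (∏_{x∈𝒳∖Y} (1 − p(x))). Then p(s) / (1 + Σ_{x∈𝒳, x≠s} p(x)) ≤ Σ_{Y⊆𝒳 with s∈Y} (1/|Y|) · Pr[Y]. -/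
lemma aux_conv (a q : ℝ) (ha : 0 < a) (h0 : 0 ≤ q) (h1 : q ≤ 1) :
    1 / (a + q) ≤ (1 - q) * (1 / a) + q * (1 / (a + 1)) := by
  have e : (1 - q) * (1 / a) + q * (1 / (a + 1)) - 1 / (a + q)
      = q * (1 - q) / (a * (a + 1) * (a + q)) := by
    have : a + q ≠ 0 := by positivity
    field_simp
    ring
  have : 0 ≤ q * (1 - q) / (a * (a + 1) * (a + q)) := by
    have : 0 ≤ 1 - q := by linarith
    positivity
  linarith

lemma aux_ind {X : Type} [DecidableEq X] (p : X → ℝ) (hp : ∀ x, p x ∈ Set.Icc (0 : ℝ) 1)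
    (T : Finset X) : ∀ c : ℝ, 0 < c → 1 / (c + ∑ x ∈ T, p x) ≤
      ∑ Z ∈ T.powerset, (1 / (c + (Z.card : ℝ))) * ((∏ x ∈ Z, p x) * ∏ x ∈ T \ Z, (1 - p x)) := by
  induction T using Finset.induction_on with
  | empty => intro c hc; simp
  | insert a T ha ih =>
    intro c hc
    have hS : 0 ≤ ∑ x ∈ T, p x := Finset.sum_nonneg fun x _ => (hp x).1
    have h1 := ih c hc
    have h2 := ih (c + 1) (by linarith)
    have h3 := aux_conv (c + ∑ x ∈ T, p x) (p a) (by linarith) (hp a).1 (hp a).2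
    rw [Finset.sum_powerset_insert ha, Finset.sum_insert ha]
    have e1 : ∑ Z ∈ T.powerset, (1 / (c + (Z.card : ℝ))) *
        ((∏ x ∈ Z, p x) * ∏ x ∈ (insert a T) \ Z, (1 - p x)) = (1 - p a) *
        ∑ Z ∈ T.powerset, (1 / (c + (Z.card : ℝ))) *
          ((∏ x ∈ Z, p x) * ∏ x ∈ T \ Z, (1 - p x)) := by
      rw [Finset.mul_sum]
      refine Finset.sum_congr rfl fun Z hZ => ?_
      have haZ : a ∉ Z := fun h => ha (Finset.mem_powerset.1 hZ h)
      rw [Finset.insert_sdiff_of_notMem _ haZ, Finset.prod_insert (by simp [ha])]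
      ring
    have e2 : ∑ Z ∈ T.powerset, (1 / (c + ((insert a Z).card : ℝ))) *
        ((∏ x ∈ insert a Z, p x) * ∏ x ∈ (insert a T) \ (insert a Z), (1 - p x)) = p a *
        ∑ Z ∈ T.powerset, (1 / (c + 1 + (Z.card : ℝ))) *
          ((∏ x ∈ Z, p x) * ∏ x ∈ T \ Z, (1 - p x)) := by
      rw [Finset.mul_sum]
      refine Finset.sum_congr rfl fun Z hZ => ?_
      have haZ : a ∉ Z := fun h => ha (Finset.mem_powerset.1 hZ h)
      have : (insert a T) \ (insert a Z) = T \ Z := by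
        ext x; simp only [Finset.mem_sdiff, Finset.mem_insert]; grind
      rw [this, Finset.prod_insert haZ, Finset.card_insert_of_notMem haZ]
      push_cast
      rw [show c + ((Z.card : ℝ) + 1) = c + 1 + Z.card by ring]
      ring
    rw [e1, e2]
    have h4 := mul_le_mul_of_nonneg_left h1 (sub_nonneg.2 (hp a).2)
    have h5 := mul_le_mul_of_nonneg_left h2 (hp a).1
    rw [show c + 1 + ∑ x ∈ T, p x = c + ∑ x ∈ T, p x + 1 by ring] at h5
    rw [show c + (p a + ∑ x ∈ T, p x) = c + ∑ x ∈ T, p x + p a by ring]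
    linarith

/-- For a random subset `Y` of `𝒳` formed by independently including
each `x` with probability `p x`, the expectation of `1/|Y|` restricted to the event
`s ∈ Y` is at least `p s / (1 + Σ_{x ≠ s} p x)`. -/
theorem random_subset_uniform_output_bound (X : Type) [Fintype X] [DecidableEq X]
    (p : X → ℝ) (hp : ∀ x, p x ∈ Set.Icc (0 : ℝ) 1) (s : X) :
    p s / (1 + ∑ x ∈ Finset.univ.erase s, p x)
      ≤ ∑ Y ∈ Finset.univ.filter (fun Y : Finset X => s ∈ Y),
          (1 / (Y.card : ℝ)) * ((∏ x ∈ Y, p x) * ∏ x ∈ Yᶜ, (1 - p x)) := by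
  have h := mul_le_mul_of_nonneg_left (aux_ind p hp (Finset.univ.erase s) 1 one_pos) (hp s).1
  rw [mul_one_div] at h
  refine h.trans (le_of_eq ?_)
  have hs : s ∉ (Finset.univ.erase s : Finset X) := by simp
  have hu : (Finset.univ : Finset (Finset X)) = (insert s (Finset.univ.erase s)).powerset := by
    rw [Finset.insert_erase (Finset.mem_univ s), Finset.powerset_univ]
  rw [Finset.sum_filter, hu, Finset.sum_powerset_insert hs, Finset.mul_sum]
  symm
  rw [Finset.sum_eq_zero (s := (Finset.univ.erase s).powerset), zero_add]
  · refine Finset.sum_congr rfl fun Z hZ => ?_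
    have haZ : s ∉ Z := fun h => hs (Finset.mem_powerset.1 hZ h)
    have : (insert s Z)ᶜ = (Finset.univ.erase s) \ Z := by
      ext x; simp
    rw [if_pos (Finset.mem_insert_self s Z), this, Finset.prod_insert haZ,
      Finset.card_insert_of_notMem haZ]
    push_cast
    rw [add_comm (1 : ℝ)]
    ring
  · intro Z hZ
    exact if_neg fun h => hs (Finset.mem_powerset.1 hZ h)
end

section
/- Let ℓ : ℕ → ℕ and let (β_t)_{t∈ℕ} be a countable family, where each β_t assigns to every n ∈ ℕ a function β_{t,n} : {0,1}^{ℓ(n)} → [0,1]. Then there exists an ℓ-sequence (s_n)_{n∈ℕ} such that for every t ∈ ℕ and every n ≥ t, β_{t,n}(s_n) ≤ (n + 2) · 2^{−ℓ(n)} · (1 + Σ_{x∈{0,1}^{ℓ(n)}} β_{t,n}(x)); equivalently, β_{t,n}(s_n) ≤ (n + 2) · (2^{−ℓ(n)} + E_{x←{0,1}^{ℓ(n)}} β_{t,n}(x)). -/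
/-- Derandomization by diagonalization: for any countable family of
`[0,1]`-valued functions `β t n` on `{0,1}^{ℓ n}`, there is a fixed `ℓ`-sequence
`s` such that for all `t` and all `n ≥ t`,
`β t n (s n) ≤ (n+2) · 2^{-ℓ n} · (1 + Σ_x β t n x)`. -/
theorem derandomize_on_ingenerable (ℓ : ℕ → ℕ)
    (β : ℕ → ∀ n : ℕ, (Fin (ℓ n) → Bool) → ℝ)
    (hβ : ∀ t n x, β t n x ∈ Set.Icc (0 : ℝ) 1) :
    ∃ s : ∀ n : ℕ, Fin (ℓ n) → Bool, ∀ t n : ℕ, t ≤ n →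
      β t n (s n) ≤
        ((n : ℝ) + 2) * ((2 : ℝ) ^ ℓ n)⁻¹ * (1 + ∑ x : Fin (ℓ n) → Bool, β t n x) := by
  have hS : ∀ t n, 0 ≤ ∑ x : Fin (ℓ n) → Bool, β t n x := fun t n =>
    Finset.sum_nonneg fun x _ => (hβ t n x).1
  have key : ∀ n : ℕ, ∃ s : Fin (ℓ n) → Bool, ∀ t, t ≤ n → β t n s ≤
        ((n : ℝ) + 2) * ((2 : ℝ) ^ ℓ n)⁻¹ * (1 + ∑ x : Fin (ℓ n) → Bool, β t n x) := by
    intro n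
    have hsum : ∑ x : Fin (ℓ n) → Bool, ∑ t ∈ Finset.range (n + 1),
        β t n x / (1 + ∑ y : Fin (ℓ n) → Bool, β t n y) ≤
        ∑ _x : Fin (ℓ n) → Bool, ((n : ℝ) + 2) * ((2 : ℝ) ^ ℓ n)⁻¹ := by
      rw [Finset.sum_comm]
      have h1 : ∀ t ∈ Finset.range (n + 1), ∑ x : Fin (ℓ n) → Bool,
          β t n x / (1 + ∑ y : Fin (ℓ n) → Bool, β t n y) ≤ 1 := by
        intro t _
        have := hS t n
        rw [← Finset.sum_div, div_le_one (by linarith)]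
        linarith
      refine (Finset.sum_le_sum h1).trans ?_
      have h2 : ((2 : ℝ) ^ ℓ n) ≠ 0 := by positivity
      have h3 : ((2 : ℝ) ^ ℓ n) * (((n : ℝ) + 2) * ((2 : ℝ) ^ ℓ n)⁻¹) = n + 2 := by
        field_simp
      simp only [Finset.sum_const, Finset.card_range, Finset.card_univ, Fintype.card_fun,
        Fintype.card_bool, Fintype.card_fin, nsmul_eq_mul]
      push_cast
      rw [h3]
      linarith
    obtain ⟨s, -, hs⟩ := Finset.exists_le_of_sum_le Finset.univ_nonempty hsum
    refine ⟨s, fun t ht => ?_⟩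
    have hp : 0 < 1 + ∑ y : Fin (ℓ n) → Bool, β t n y := by linarith [hS t n]
    rw [← div_le_iff₀ hp]
    refine le_trans ?_ hs
    exact Finset.single_le_sum
      (f := fun t => β t n s / (1 + ∑ y : Fin (ℓ n) → Bool, β t n y))
      (fun i _ => div_nonneg (hβ i n s).1 (by linarith [hS i n]))
      (Finset.mem_range.2 (by omega))
  choose s hs using key
  exact ⟨s, fun t n h => hs n t h⟩
end

section
/- Let ℓ : ℕ → ℕ be such that n ↦ 2^{−ℓ(n)} is negligible, and let (β_t)_{t∈ℕ} be a countable family, where each β_t assigns to every n ∈ ℕ a function β_{t,n} : {0,1}^{ℓ(n)} → [0,1]. Then there exists an ℓ-sequence (s_n)_{n∈ℕ} such that for every t ∈ ℕ the following holds: if the average n ↦ 2^{−ℓ(n)} · Σ_{x∈{0,1}^{ℓ(n)}} β_{t,n}(x) is negligible, then n ↦ β_{t,n}(s_n) is negligible. -/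
/-- A function `f : ℕ → ℝ` is negligible if for every `c`, `f n ≤ n⁻ᶜ` for all
sufficiently large `n`. -/
def Negligible (f : ℕ → ℝ) : Prop :=
  ∀ c : ℕ, ∃ N : ℕ, ∀ n ≥ N, f n ≤ 1 / (n : ℝ) ^ c

/-- If `2^{-ℓ}` is negligible, then for any countable family of
`[0,1]`-valued functions `β t n` on `{0,1}^{ℓ n}` there is a fixed `ℓ`-sequence `s`
such that, for every `t`, negligible average success on uniformly random inputs
implies negligible success on the fixed inputs `s n`. -/
theorem derandomize_negligible (ℓ : ℕ → ℕ)
    (hℓ : Negligible fun n => ((2 : ℝ) ^ ℓ n)⁻¹)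
    (β : ℕ → ∀ n : ℕ, (Fin (ℓ n) → Bool) → ℝ)
    (hβ : ∀ t n x, β t n x ∈ Set.Icc (0 : ℝ) 1) :
    ∃ s : ∀ n : ℕ, Fin (ℓ n) → Bool, ∀ t : ℕ,
      Negligible (fun n => ((2 : ℝ) ^ ℓ n)⁻¹ * ∑ x : Fin (ℓ n) → Bool, β t n x) →
      Negligible (fun n => β t n (s n)) := by
  have key : ∀ n : ℕ, ∃ x : Fin (ℓ n) → Bool, ∀ t < n,
      β t n x ≤ n * (((2 : ℝ) ^ ℓ n)⁻¹ * ∑ y : Fin (ℓ n) → Bool, β t n y) := by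
    intro n
    have h0 : ∀ t, 0 ≤ ∑ y : Fin (ℓ n) → Bool, β t n y :=
      fun t => Finset.sum_nonneg fun y _ => (hβ t n y).1
    obtain ⟨x, -, hx⟩ : ∃ x ∈ (Finset.univ : Finset (Fin (ℓ n) → Bool)),
        ∑ t ∈ Finset.range n, β t n x / ∑ y : Fin (ℓ n) → Bool, β t n y
          ≤ n * ((2 : ℝ) ^ ℓ n)⁻¹ := by
      apply Finset.exists_le_of_sum_le Finset.univ_nonempty
      rw [Finset.sum_comm]
      have h1 : ∑ _x : Fin (ℓ n) → Bool, (n : ℝ) * ((2 : ℝ) ^ ℓ n)⁻¹ = n := by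
        simp
        field_simp
      rw [h1]
      calc _ ≤ ∑ t ∈ Finset.range n, (1 : ℝ) := by
            apply Finset.sum_le_sum
            intro t _
            rw [← Finset.sum_div]
            exact div_self_le_one _
        _ = n := by simp
    refine ⟨x, fun t ht => ?_⟩
    have h2 : β t n x / ∑ y : Fin (ℓ n) → Bool, β t n y ≤ n * ((2 : ℝ) ^ ℓ n)⁻¹ :=
      le_trans (Finset.single_le_sum
        (f := fun t => β t n x / ∑ y : Fin (ℓ n) → Bool, β t n y)
        (fun i _ => div_nonneg (hβ i n x).1 (h0 i)) (Finset.mem_range.2 ht)) hx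
    have h3 : β t n x ≤ ∑ y : Fin (ℓ n) → Bool, β t n y :=
      Finset.single_le_sum (f := fun y => β t n y) (fun y _ => (hβ t n y).1) (Finset.mem_univ x)
    rcases (h0 t).eq_or_lt with h | h
    · rw [← h] at h3 ⊢
      simpa using h3
    · rw [div_le_iff₀ h] at h2
      linarith
  choose s hs using key
  refine ⟨s, fun t h c => ?_⟩
  obtain ⟨N, hN⟩ := h (c + 1)
  refine ⟨max N (t + 1), fun n hn => ?_⟩
  have hn1 : N ≤ n := le_trans (le_max_left _ _) hn
  have hn2 : t < n := le_trans (le_max_right N (t + 1)) hn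
  have hpos : (0 : ℝ) < n := by exact_mod_cast (Nat.zero_le t).trans_lt hn2
  calc β t n (s n) ≤ _ := hs n t hn2
    _ ≤ n * (1 / (n : ℝ) ^ (c + 1)) := mul_le_mul_of_nonneg_left (hN n hn1) hpos.le
    _ = 1 / (n : ℝ) ^ c := by
      rw [pow_succ]
      field_simp
end

section
/- Let g : ℕ → ℕ be a map with g ∈ O(n^d) for some positive integer d. Then there exists a computable non-decreasing map f : ℕ → ℕ and a real number r > 0 (one may take r = 1/(2d)) such that g(f(n)) < n for all sufficiently large n, and f ∈ Ω(n^r) ∩ O(n^r), i.e., there exist constants k_1, k_2 > 0 with k_1 · n^r ≤ f(n) ≤ k_2 · n^r for all sufficiently large n. -/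
theorem primrec_pow_aux (e : ℕ) : Primrec (fun x : ℕ => x ^ e) := by
  induction e with
  | zero => simpa using Primrec.const 1
  | succ e ih => exact (Primrec.nat_mul.comp ih Primrec.id).of_eq fun n => (pow_succ n e).symm

/-- If `g ∈ O(n^d)` for a positive integer `d`, then there is a
computable non-decreasing map `f : ℕ → ℕ` and a real `r > 0` such that
`g (f n) < n` for all sufficiently large `n` and `f ∈ Ω(n^r) ∩ O(n^r)`. -/
theorem exists_slowdown (g : ℕ → ℕ) (d : ℕ) (hd : 0 < d)
    (hg : ∃ k : ℝ, 0 < k ∧ ∃ n₀ : ℕ, ∀ n ≥ n₀, (g n : ℝ) ≤ k * (n : ℝ) ^ d) :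
    ∃ (f : ℕ → ℕ) (r : ℝ), Computable f ∧ Monotone f ∧ 0 < r ∧
      (∃ N : ℕ, ∀ n ≥ N, g (f n) < n) ∧
      (∃ k₁ k₂ : ℝ, 0 < k₁ ∧ 0 < k₂ ∧ ∃ n₁ : ℕ, ∀ n ≥ n₁,
        k₁ * (n : ℝ) ^ r ≤ (f n : ℝ) ∧ (f n : ℝ) ≤ k₂ * (n : ℝ) ^ r) := by
  obtain ⟨k, hk, n₀, hg⟩ := hg
  obtain ⟨e, he⟩ : ∃ e, e = 2 * d := ⟨_, rfl⟩
  have he0 : e ≠ 0 := by omega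
  obtain ⟨f, hf⟩ : ∃ f : ℕ → ℕ, f = fun n => Nat.findGreatest (fun m => m ^ e ≤ n) n := ⟨_, rfl⟩
  have hle : ∀ n, f n ^ e ≤ n := by
    intro n
    rw [hf]
    exact Nat.findGreatest_spec (P := fun m => m ^ e ≤ n) (Nat.zero_le n) (by simp [he0])
  have hge : ∀ n m, m ^ e ≤ n → m ≤ f n := by
    intro n m h
    rw [hf]
    exact Nat.le_findGreatest ((Nat.le_self_pow he0 m).trans h) h
  have hrpow : ∀ x : ℕ, ((x : ℝ) ^ e) ^ (1 / (e : ℝ)) = x := by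
    intro x
    rw [one_div]
    exact Real.pow_rpow_inv_natCast (Nat.cast_nonneg x) he0
  have hr : (0 : ℝ) < 1 / (e : ℝ) := by positivity
  refine ⟨f, 1 / (e : ℝ), ?_, ?_, hr, ?_, 1 / 2, 1, by norm_num, one_pos, 1, ?_⟩
  · rw [hf]
    apply Primrec.to_comp
    refine Primrec.nat_findGreatest (p := fun n m => m ^ e ≤ n) Primrec.id ?_
    exact Primrec.nat_le.comp ((primrec_pow_aux e).comp Primrec.snd) Primrec.fst
  · intro a b h
    exact hge _ _ ((hle a).trans h)
  · obtain ⟨M, hM⟩ := exists_nat_gt (k ^ 2)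
    refine ⟨n₀ ^ e + M + 1, fun n hn => ?_⟩
    have h1 := hg (f n) (hge _ _ (by omega))
    have h2 : ((f n : ℝ) ^ d) ^ 2 ≤ n := by
      rw [← pow_mul, mul_comm d 2, ← he]
      exact_mod_cast hle n
    have h3 : (M : ℝ) ≤ n := by exact_mod_cast (by omega : M ≤ n)
    have h4 : (0 : ℝ) < n := by exact_mod_cast (by omega : 0 < n)
    have h5 : k * (f n : ℝ) ^ d < n := by
      apply lt_of_pow_lt_pow_left₀ 2 h4.le
      rw [mul_pow]
      calc k ^ 2 * ((f n : ℝ) ^ d) ^ 2 ≤ k ^ 2 * (n : ℝ) := by gcongr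
        _ < (n : ℝ) * n := by apply mul_lt_mul_of_pos_right _ h4; linarith
        _ = (n : ℝ) ^ 2 := by ring
    exact_mod_cast h1.trans_lt h5
  · intro n hn
    constructor
    · have h1 : 1 ≤ f n := hge _ _ (by simpa using hn)
      have h2 : n ≤ (f n + 1) ^ e := by
        by_contra! h
        have := hge n (f n + 1) h.le
        omega
      have h3 : (n : ℝ) ≤ ((f n + 1 : ℕ) : ℝ) ^ e := by exact_mod_cast h2
      have h4 := Real.rpow_le_rpow (Nat.cast_nonneg n) h3 hr.le
      rw [hrpow] at h4
      have h5 : (1 : ℝ) ≤ f n := by exact_mod_cast h1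
      push_cast at h4
      linarith
    · have h3 : (f n : ℝ) ^ e ≤ n := by exact_mod_cast hle n
      have h4 := Real.rpow_le_rpow (by positivity) h3 hr.le
      rw [hrpow] at h4
      linarith
end

section
/- Let n ∈ ℕ and let Φ be a quantum channel from n qubits to 2n qubits. Then 4^{−n} · Σ_{x∈{0,1}^n} Σ_{θ∈{0,1}^n} (⟨x^θ| ⊗ ⟨x^θ|) Φ(|x^θ⟩⟨x^θ|) (|x^θ⟩ ⊗ |x^θ⟩) ≤ (3/4)^n. In words: the expected fidelity, over a uniformly random Wiesner state on n qubits, between the output of any cloning channel and two perfect copies of the state is at most (3/4)^n. -/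
open scoped Matrix

/-- The amplitude of the single-qubit state `H^θᵢ |xᵢ⟩` at the basis state `|sᵢ⟩`. -/
noncomputable def qAmp (xi θi si : Bool) : ℂ :=
  if θi then ((1 / Real.sqrt 2 : ℝ) : ℂ) * (if xi && si then -1 else 1)
  else if si = xi then 1 else 0

/-- The Wiesner state `|x^θ⟩ = H^{θ₁}|x₁⟩ ⊗ ⋯ ⊗ H^{θₙ}|xₙ⟩` as a vector indexed by
computational basis strings. -/
noncomputable def wiesnerVec {n : ℕ} (x θ : Fin n → Bool) : (Fin n → Bool) → ℂ :=
  fun s => ∏ i : Fin n, qAmp (x i) (θ i) (s i)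

/-- The density matrix `|x^θ⟩⟨x^θ|` of a Wiesner state. -/
noncomputable def wiesnerDM {n : ℕ} (x θ : Fin n → Bool) :
    Matrix (Fin n → Bool) (Fin n → Bool) ℂ :=
  fun s s' => wiesnerVec x θ s * star (wiesnerVec x θ s')

/-- The two-fold tensor `v ⊗ v` of a vector on `n` qubits, as a vector on `2n` qubits. -/
noncomputable def pairVec {n : ℕ} (v : (Fin n → Bool) → ℂ) : (Fin (2 * n) → Bool) → ℂ :=
  fun s => v (fun i => s ⟨i.val, by have := i.isLt; omega⟩) *
    v (fun i => s ⟨n + i.val, by have := i.isLt; omega⟩)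

/-- The fidelity `⟨x^θ| ⊗ ⟨x^θ| Φ(|x^θ⟩⟨x^θ|) |x^θ⟩ ⊗ |x^θ⟩` of the output of the
channel with Kraus operators `K` on input `|x^θ⟩⟨x^θ|` with two perfect copies. -/
noncomputable def cloneFid {n m : ℕ}
    (K : Fin m → Matrix (Fin (2 * n) → Bool) (Fin n → Bool) ℂ)
    (x θ : Fin n → Bool) : ℝ :=
  (∑ s : Fin (2 * n) → Bool, ∑ s' : Fin (2 * n) → Bool,
    star (pairVec (wiesnerVec x θ) s) *
      (∑ i, K i * wiesnerDM x θ * (K i)ᴴ) s s' *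
      pairVec (wiesnerVec x θ) s').re

theorem wcb_qAmp_star (a b c : Bool) : star (qAmp a b c) = qAmp a b c := by
  cases a <;> cases b <;> cases c <;> simp [qAmp]

theorem wcb_tensor {A T : Type} [Fintype A] [Fintype T] (M : A → T → ℂ) (c : ℝ) (hc : 0 ≤ c)
    (h1 : ∀ u : T → ℂ, ∑ a, Complex.normSq (∑ t, M a t * u t) ≤ c * ∑ t, Complex.normSq (u t))
    (n : ℕ) : ∀ w : (Fin n → T) → ℂ,
    ∑ a : Fin n → A, Complex.normSq (∑ t : Fin n → T, (∏ i, M (a i) (t i)) * w t)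
      ≤ c ^ n * ∑ t, Complex.normSq (w t) := by
  induction n with
  | zero => intro w; simp
  | succ n ih =>
    intro w
    rw [← (Fin.consEquiv (fun _ => A)).sum_comp, ← (Fin.consEquiv (fun _ => T)).sum_comp]
    simp_rw [← (Fin.consEquiv (fun _ : Fin (n+1) => T)).sum_comp, Fintype.sum_prod_type]
    simp only [Fin.consEquiv_apply, Fin.prod_univ_succ, Fin.cons_zero, Fin.cons_succ]
    calc _ = ∑ a0 : A, ∑ a : Fin n → A, Complex.normSq (∑ t : Fin n → T,
              (∏ i, M (a i) (t i)) * ∑ t0, M a0 t0 * w (Fin.cons t0 t)) := by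
          refine Finset.sum_congr rfl fun a0 _ => Finset.sum_congr rfl fun a _ => ?_
          rw [Finset.sum_comm]
          congr 1
          refine Finset.sum_congr rfl fun t _ => ?_
          rw [Finset.mul_sum]
          refine Finset.sum_congr rfl fun t0 _ => ?_
          change _ * w (Fin.cons t0 t) = _
          ring
      _ ≤ ∑ a0 : A, c ^ n * ∑ t : Fin n → T,
            Complex.normSq (∑ t0, M a0 t0 * w (Fin.cons t0 t)) :=
          Finset.sum_le_sum fun a0 _ => ih _
      _ = c ^ n * ∑ t : Fin n → T, ∑ a0 : A,
            Complex.normSq (∑ t0, M a0 t0 * w (Fin.cons t0 t)) := by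
          rw [← Finset.mul_sum, Finset.sum_comm]
      _ ≤ c ^ n * ∑ t : Fin n → T, c * ∑ t0, Complex.normSq (w (Fin.cons t0 t)) := by
          gcongr with t _
          exact h1 _
      _ = _ := by
          rw [← Finset.mul_sum, Finset.sum_comm, pow_succ, mul_assoc]
          rfl

theorem wcb_real (a b d e f g h k r : ℝ) (hr : r ^ 2 = 1 / 2) :
    a ^ 2 + k ^ 2 + (r ^ 3 * (a + b + d + e + f + g + h + k)) ^ 2
      + (r ^ 3 * (a - b - d + e - f + g + h - k)) ^ 2
      ≤ 3 / 2 * (a ^ 2 + b ^ 2 + d ^ 2 + e ^ 2 + f ^ 2 + g ^ 2 + h ^ 2 + k ^ 2) := by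
  have h6 : (r ^ 3) ^ 2 = 1 / 8 := by
    rw [← pow_mul, show 3 * 2 = 2 * 3 by rfl, pow_mul, hr]; norm_num
  rw [mul_pow, mul_pow, h6]
  nlinarith [sq_nonneg (a - (e + g + h)), sq_nonneg (e - g), sq_nonneg (e - h), sq_nonneg (g - h),
    sq_nonneg (k - (b + d + f)), sq_nonneg (b - d), sq_nonneg (b - f), sq_nonneg (d - f)]

noncomputable def wcbM (a : Bool × Bool) (t : Bool × Bool × Bool) : ℂ :=
  qAmp a.1 a.2 t.1 * qAmp a.1 a.2 t.2.1 * qAmp a.1 a.2 t.2.2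

theorem wcb_site (u : Bool × Bool × Bool → ℂ) :
    ∑ a, Complex.normSq (∑ t, wcbM a t * u t) ≤ 3 / 2 * ∑ t, Complex.normSq (u t) := by
  obtain ⟨r, hr, hr'⟩ : ∃ r : ℝ, r = 1 / Real.sqrt 2 ∧ r ^ 2 = 1 / 2 :=
    ⟨_, rfl, by rw [div_pow, Real.sq_sqrt (by norm_num)]; norm_num⟩
  have e1 := wcb_real (u (false, false, false)).re (u (false, false, true)).re
    (u (false, true, false)).re (u (false, true, true)).re (u (true, false, false)).re
    (u (true, false, true)).re (u (true, true, false)).re (u (true, true, true)).re r hr'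
  have e2 := wcb_real (u (false, false, false)).im (u (false, false, true)).im
    (u (false, true, false)).im (u (false, true, true)).im (u (true, false, false)).im
    (u (true, false, true)).im (u (true, true, false)).im (u (true, true, true)).im r hr'
  simp only [Fintype.sum_prod_type, Fintype.sum_bool, wcbM, qAmp, ← hr]
  simp [Complex.normSq_apply, -one_div]
  linarith

def wcbEquiv (n : ℕ) : (Fin (2 * n) → Bool) × (Fin n → Bool) ≃ (Fin n → Bool × Bool × Bool) where
  toFun p := fun i => (p.1 ⟨i.val, by have := i.isLt; omega⟩,
    p.1 ⟨n + i.val, by have := i.isLt; omega⟩, p.2 i)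
  invFun g := (fun j => if h : j.val < n then (g ⟨j.val, h⟩).1
    else (g ⟨j.val - n, by have := j.isLt; omega⟩).2.1, fun i => (g i).2.2)
  left_inv p := by
    ext j
    · by_cases h : j.val < n
      · simp [h]
      · have : n + (j.val - n) = j.val := by omega
        simp [h, this]
    · rfl
  right_inv g := by
    ext i <;> simp

theorem wcb_fid {n m : ℕ} (K : Fin m → Matrix (Fin (2 * n) → Bool) (Fin n → Bool) ℂ)
    (x θ : Fin n → Bool) : cloneFid K x θ = ∑ i, Complex.normSq
      (∑ t : Fin n → Bool × Bool × Bool, (∏ j, wcbM (x j, θ j) (t j)) *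
        K i ((wcbEquiv n).symm t).1 ((wcbEquiv n).symm t).2) := by
  have hv : ∀ s, star (wiesnerVec x θ s) = wiesnerVec x θ s := by
    intro s; simp only [wiesnerVec, star_prod, wcb_qAmp_star]
  have hp : ∀ s, star (pairVec (wiesnerVec x θ) s) = pairVec (wiesnerVec x θ) s := by
    intro s; simp only [pairVec, star_mul', hv]
  have key : ∀ i, (∑ t : Fin n → Bool × Bool × Bool, (∏ j, wcbM (x j, θ j) (t j)) *
        K i ((wcbEquiv n).symm t).1 ((wcbEquiv n).symm t).2)
      = ∑ s, ∑ t, pairVec (wiesnerVec x θ) s * K i s t * wiesnerVec x θ t := by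
    intro i
    rw [← (wcbEquiv n).sum_comp, Fintype.sum_prod_type]
    refine Finset.sum_congr rfl fun s _ => Finset.sum_congr rfl fun t _ => ?_
    simp only [Equiv.symm_apply_apply]
    simp only [wcbM, wcbEquiv, Equiv.coe_fn_mk, Finset.prod_mul_distrib, pairVec, wiesnerVec]
    ring
  have key2 : (∑ s : Fin (2 * n) → Bool, ∑ s' : Fin (2 * n) → Bool,
    star (pairVec (wiesnerVec x θ) s) *
      (∑ i, K i * wiesnerDM x θ * (K i)ᴴ) s s' *
      pairVec (wiesnerVec x θ) s') = ∑ i,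
      (∑ s, ∑ t, pairVec (wiesnerVec x θ) s * K i s t * wiesnerVec x θ t) *
      star (∑ s, ∑ t, pairVec (wiesnerVec x θ) s * K i s t * wiesnerVec x θ t) := by
    have h3 : ∀ i s s', (K i * wiesnerDM x θ * (K i)ᴴ) s s' =
        (∑ t, K i s t * wiesnerVec x θ t) * (∑ t, star (K i s' t) * wiesnerVec x θ t) := by
      intro i s s'
      simp only [Matrix.mul_apply, Matrix.conjTranspose_apply, wiesnerDM, hv]
      rw [Finset.mul_sum]
      refine Finset.sum_congr rfl fun t _ => ?_
      rw [Finset.sum_mul, Finset.sum_mul]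
      refine Finset.sum_congr rfl fun t' _ => ?_
      ring
    have h4 : ∀ s s', (∑ i, K i * wiesnerDM x θ * (K i)ᴴ) s s' =
        ∑ i, (K i * wiesnerDM x θ * (K i)ᴴ) s s' := fun s s' => by rw [Matrix.sum_apply]
    simp only [h4, h3, hp, star_sum, star_mul', hv]
    calc _ = ∑ s, ∑ i, ∑ s', (∑ t, pairVec (wiesnerVec x θ) s * K i s t * wiesnerVec x θ t) *
          (∑ t, pairVec (wiesnerVec x θ) s' * star (K i s' t) * wiesnerVec x θ t) := by
          refine Finset.sum_congr rfl fun s _ => ?_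
          rw [Finset.sum_comm]
          refine Finset.sum_congr rfl fun s' _ => ?_
          rw [Finset.mul_sum, Finset.sum_mul]
          refine Finset.sum_congr rfl fun i _ => ?_
          simp only [mul_assoc, ← Finset.mul_sum]
          ring
      _ = _ := by
          rw [Finset.sum_comm]
          refine Finset.sum_congr rfl fun i _ => ?_
          rw [Finset.sum_mul_sum]
  unfold cloneFid
  rw [key2, Complex.re_sum]
  refine Finset.sum_congr rfl fun i _ => ?_
  rw [key]
  erw [Complex.mul_conj, Complex.ofReal_re]

theorem wcb_trace {n m : ℕ} (K : Fin m → Matrix (Fin (2 * n) → Bool) (Fin n → Bool) ℂ)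
    (hK : ∑ i, (K i)ᴴ * K i = 1) : ∑ i, ∑ s, ∑ t, Complex.normSq (K i s t) = 2 ^ n := by
  have h := congrArg (fun X => (Matrix.trace X).re) hK
  simp only [Matrix.trace_one, Matrix.trace_sum, Complex.re_sum] at h
  simp only [Matrix.trace, Matrix.diag, Matrix.mul_apply, Matrix.conjTranspose_apply] at h
  simp only [Fintype.card_fun, Fintype.card_bool, Fintype.card_fin, Complex.re_sum] at h
  have h2 : ((2 ^ n : ℕ) : ℂ).re = 2 ^ n := by rw [Complex.natCast_re]; push_cast; rfl
  rw [h2] at h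
  rw [← h]
  refine Finset.sum_congr rfl fun i _ => ?_
  rw [Finset.sum_comm]
  refine Finset.sum_congr rfl fun s _ => Finset.sum_congr rfl fun t _ => ?_
  simp [Complex.normSq_apply]

theorem wiesner_cloning_bound (n m : ℕ)
    (K : Fin m → Matrix (Fin (2 * n) → Bool) (Fin n → Bool) ℂ)
    (hK : ∑ i, (K i)ᴴ * K i = 1) :
    ((4 : ℝ) ^ n)⁻¹ *
      ∑ x : Fin n → Bool, ∑ θ : Fin n → Bool, cloneFid K x θ ≤ (3 / 4 : ℝ) ^ n := by
  have main : ∑ x : Fin n → Bool, ∑ θ : Fin n → Bool, cloneFid K x θ ≤ 3 ^ n := by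
    simp_rw [wcb_fid]
    calc _ = ∑ i, ∑ a : Fin n → Bool × Bool, Complex.normSq
            (∑ t : Fin n → Bool × Bool × Bool, (∏ j, wcbM (a j) (t j)) *
            K i ((wcbEquiv n).symm t).1 ((wcbEquiv n).symm t).2) := by
          rw [Finset.sum_comm (s := (Finset.univ : Finset (Fin m))),
            ← (Equiv.arrowProdEquivProdArrow (Fin n) (fun _ => Bool) (fun _ => Bool)).symm.sum_comp,
            Fintype.sum_prod_type]
          rfl
      _ ≤ ∑ i, (3 / 2) ^ n * ∑ t : Fin n → Bool × Bool × Bool, Complex.normSq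
            (K i ((wcbEquiv n).symm t).1 ((wcbEquiv n).symm t).2) :=
          Finset.sum_le_sum fun i _ => wcb_tensor wcbM (3 / 2) (by norm_num) wcb_site n _
      _ = (3 / 2) ^ n * ∑ i, ∑ s, ∑ t, Complex.normSq (K i s t) := by
          rw [← Finset.mul_sum]
          congr 1
          refine Finset.sum_congr rfl fun i _ => ?_
          rw [← (wcbEquiv n).sum_comp, Fintype.sum_prod_type]
          simp only [Equiv.symm_apply_apply]
      _ = 3 ^ n := by
          rw [wcb_trace K hK, ← mul_pow]; norm_num
  rw [div_pow, div_eq_inv_mul]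
  gcongr
end

section
/- Let (Φ_t)_{t∈ℕ} be a countable family, where each Φ_t assigns to every n ∈ ℕ a quantum channel Φ_{t,n} from n qubits to 2n qubits. Then there exist bit strings x_n, θ_n ∈ {0,1}^n for every n ∈ ℕ such that for every t ∈ ℕ, the function n ↦ (⟨x_n^{θ_n}| ⊗ ⟨x_n^{θ_n}|) Φ_{t,n}(|x_n^{θ_n}⟩⟨x_n^{θ_n}|) (|x_n^{θ_n}⟩ ⊗ |x_n^{θ_n}⟩) is negligible. In words: there is a single fixed sequence of Wiesner states that every member of the countable family of cloning channels fails to clone with more than negligible fidelity. -/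
open scoped Matrix

/-! ### Helper lemmas -/

noncomputable def siteA (a : Bool × Bool) (b : Bool × Bool × Bool) : ℂ :=
  star (qAmp a.1 a.2 b.1) * star (qAmp a.1 a.2 b.2.1) * qAmp a.1 a.2 b.2.2

lemma real_aux (a b c d : ℝ) :
    a ^ 2 + (a + b + c + d) ^ 2 / 4 ≤ 3 / 2 * (a ^ 2 + b ^ 2 + c ^ 2 + d ^ 2) := by
  nlinarith [sq_nonneg (a - b - c - d), sq_nonneg (b - c), sq_nonneg (b - d), sq_nonneg (c - d)]

lemma site_bound (v : Bool × Bool × Bool → ℂ) :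
    ∑ a, Complex.normSq (∑ b, siteA a b * v b) ≤ 3 / 2 * ∑ b, Complex.normSq (v b) := by
  obtain ⟨r, hr⟩ : ∃ r : ℝ, r = 1 / Real.sqrt 2 := ⟨_, rfl⟩
  have hr2 : r ^ 2 = 1 / 2 := by
    rw [hr, div_pow, Real.sq_sqrt (by norm_num)]; norm_num
  have hr6 : r * r * r * (r * r * r) = 1 / 8 := by
    have : r * r * r * (r * r * r) = (r ^ 2) ^ 3 := by ring
    rw [this, hr2]; norm_num
  have e1 : ∀ z : ℂ, Complex.normSq ((r : ℂ) * r * r * z) = 1 / 8 * Complex.normSq z := by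
    intro z
    simp only [Complex.normSq_mul, Complex.normSq_ofReal]
    rw [← hr6]; ring
  have hA : ∑ b, siteA (false, false) b * v b = v (false, false, false) := by
    simp [siteA, qAmp, Fintype.sum_prod_type]
  have hB : ∑ b, siteA (true, false) b * v b = v (true, true, true) := by
    simp [siteA, qAmp, Fintype.sum_prod_type]
  have hC : ∑ b, siteA (false, true) b * v b = (r : ℂ) * r * r * ∑ b, v b := by
    simp only [siteA, qAmp, ← hr, Finset.mul_sum]
    simp
  have hD : ∑ b, siteA (true, true) b * v b = (r : ℂ) * r * r *
      (v (false, false, false) - v (true, false, false) - v (false, true, false)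
        - v (false, false, true) + v (true, true, false) + v (true, false, true)
        + v (false, true, true) - v (true, true, true)) := by
    simp only [siteA, qAmp, ← hr]
    simp [Fintype.sum_prod_type]
    ring
  rw [Fintype.sum_prod_type]
  simp only [Fintype.sum_bool]
  rw [hA, hB, hC, hD, e1, e1]
  simp only [Fintype.sum_prod_type, Fintype.sum_bool, Complex.normSq_apply, Complex.add_re,
    Complex.add_im, Complex.sub_re, Complex.sub_im]
  have h1 := real_aux (v (false, false, false)).re (v (true, true, false)).re
    (v (true, false, true)).re (v (false, true, true)).re
  have h2 := real_aux (v (false, false, false)).im (v (true, true, false)).im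
    (v (true, false, true)).im (v (false, true, true)).im
  have h3 := real_aux (v (true, true, true)).re (v (false, false, true)).re
    (v (false, true, false)).re (v (true, false, false)).re
  have h4 := real_aux (v (true, true, true)).im (v (false, false, true)).im
    (v (false, true, false)).im (v (true, false, false)).im
  linarith

lemma tensor_bound {α β : Type} [Fintype α] [Fintype β] (A : α → β → ℂ) (C : ℝ) (hC : 0 ≤ C)
    (hA : ∀ v : β → ℂ, ∑ a, Complex.normSq (∑ b, A a b * v b) ≤ C * ∑ b, Complex.normSq (v b))
    (n : ℕ) : ∀ T : (Fin n → β) → ℂ,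
    ∑ a : Fin n → α, Complex.normSq (∑ b : Fin n → β, (∏ i, A (a i) (b i)) * T b)
      ≤ C ^ n * ∑ b, Complex.normSq (T b) := by
  induction n with
  | zero => intro T; simp
  | succ n ih =>
    intro T
    rw [← (Fin.consEquiv (fun _ => α)).sum_comp, Fintype.sum_prod_type]
    simp only [← (Fin.consEquiv (fun _ => β)).sum_comp, Fintype.sum_prod_type,
      Fin.consEquiv_apply, Fin.prod_univ_succ, Fin.cons_zero, Fin.cons_succ]
    calc _ = ∑ a0 : α, ∑ a : Fin n → α, Complex.normSq (∑ b : Fin n → β,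
          (∏ i, A (a i) (b i)) * ∑ b0, A a0 b0 * T (Fin.cons b0 b)) := by
          refine Finset.sum_congr rfl fun a0 _ => Finset.sum_congr rfl fun a _ => ?_
          rw [Finset.sum_comm]
          congr 1
          refine Finset.sum_congr rfl fun b _ => ?_
          rw [Finset.mul_sum]
          refine Finset.sum_congr rfl fun b0 _ => ?_
          rw [show (Fin.consEquiv fun _ => β) (b0, b) = Fin.cons b0 b from rfl]
          ring
      _ ≤ ∑ a0 : α, C ^ n * ∑ b : Fin n → β,
            Complex.normSq (∑ b0, A a0 b0 * T (Fin.cons b0 b)) :=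
          Finset.sum_le_sum fun a0 _ => ih _
      _ = C ^ n * ∑ b : Fin n → β, ∑ a0 : α,
            Complex.normSq (∑ b0, A a0 b0 * T (Fin.cons b0 b)) := by
          rw [← Finset.mul_sum, Finset.sum_comm]
      _ ≤ C ^ n * ∑ b : Fin n → β, C * ∑ b0, Complex.normSq (T (Fin.cons b0 b)) := by
          gcongr with b _
          exact hA _
      _ = _ := by
          rw [← Finset.mul_sum, Finset.sum_comm, ← mul_assoc, ← pow_succ]
          rfl

def mergeFun {n : ℕ} (p : (Fin (2 * n) → Bool) × (Fin n → Bool)) : Fin n → Bool × Bool × Bool :=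
  fun i => (p.1 ⟨i.val, by have := i.isLt; omega⟩, p.1 ⟨n + i.val, by have := i.isLt; omega⟩, p.2 i)

lemma mergeFun_bij (n : ℕ) : Function.Bijective (mergeFun (n := n)) := by
  rw [Fintype.bijective_iff_injective_and_card]
  constructor
  · rintro ⟨s, u⟩ ⟨s', u'⟩ h
    have h' := fun i => congrFun h i
    simp only [mergeFun, Prod.mk.injEq] at h'
    refine Prod.ext ?_ (funext fun i => (h' i).2.2)
    funext j
    by_cases hj : j.val < n
    · exact (h' ⟨j, hj⟩).1
    · have h2 := (h' ⟨j.val - n, by have := j.isLt; omega⟩).2.1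
      have e : (⟨n + (j.val - n), by have := j.isLt; omega⟩ : Fin (2 * n)) = j := by
        ext; simp; omega
      simpa [e] using h2
  · simp [pow_mul, ← mul_pow]

noncomputable def ampl {n : ℕ} (M : Matrix (Fin (2 * n) → Bool) (Fin n → Bool) ℂ)
    (x θ : Fin n → Bool) : ℂ :=
  ∑ s, ∑ u, star (pairVec (wiesnerVec x θ) s) * wiesnerVec x θ u * M s u

lemma cloneFid_eq {n m : ℕ}
    (K : Fin m → Matrix (Fin (2 * n) → Bool) (Fin n → Bool) ℂ) (x θ : Fin n → Bool) :
    cloneFid K x θ = ∑ i, Complex.normSq (ampl (K i) x θ) := by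
  unfold cloneFid
  have h : ∀ i, ((Complex.normSq (ampl (K i) x θ) : ℝ) : ℂ) =
      ∑ s : Fin (2 * n) → Bool, ∑ s' : Fin (2 * n) → Bool,
      star (pairVec (wiesnerVec x θ) s) * (K i * wiesnerDM x θ * (K i)ᴴ) s s' *
      pairVec (wiesnerVec x θ) s' := by
    intro i
    rw [← Complex.mul_conj]
    have e1 : ampl (K i) x θ = ∑ s, star (pairVec (wiesnerVec x θ) s) *
        ∑ u, K i s u * wiesnerVec x θ u := by
      unfold ampl
      refine Finset.sum_congr rfl fun s _ => ?_
      rw [Finset.mul_sum]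
      refine Finset.sum_congr rfl fun u _ => ?_
      ring
    have e2 : ∀ s s', (K i * wiesnerDM x θ * (K i)ᴴ) s s' =
        (∑ u, K i s u * wiesnerVec x θ u) * star (∑ u, K i s' u * wiesnerVec x θ u) := by
      intro s s'
      simp only [Matrix.mul_apply, wiesnerDM, Matrix.conjTranspose_apply, star_sum, star_mul',
        Finset.mul_sum, Finset.sum_mul]
      refine Finset.sum_congr rfl fun u _ => Finset.sum_congr rfl fun u' _ => ?_
      ring
    rw [e1, map_sum, Finset.sum_mul_sum]
    refine Finset.sum_congr rfl fun s _ => Finset.sum_congr rfl fun s' _ => ?_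
    rw [e2, map_mul]
    simp only [← starRingEnd_apply, Complex.conj_conj]
    ring
  rw [← Complex.ofReal_re (∑ i, Complex.normSq (ampl (K i) x θ)), Complex.ofReal_sum]
  congr 1
  simp only [h, Matrix.sum_apply, Finset.mul_sum, Finset.sum_mul]
  rw [Finset.sum_comm]
  conv_rhs => rw [Finset.sum_comm]
  rw [Finset.sum_comm]
  refine Finset.sum_congr rfl fun s _ => ?_
  rw [Finset.sum_comm]

lemma ampl_bound {n : ℕ} (M : Matrix (Fin (2 * n) → Bool) (Fin n → Bool) ℂ) :
    ∑ p : (Fin n → Bool) × (Fin n → Bool), Complex.normSq (ampl M p.1 p.2)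
      ≤ (3 / 2) ^ n * ∑ s, ∑ u, Complex.normSq (M s u) := by
  let e := Equiv.ofBijective _ (mergeFun_bij n)
  have h := tensor_bound siteA (3 / 2) (by norm_num) site_bound n
    (fun b => M (e.symm b).1 (e.symm b).2)
  rw [← e.sum_comp (fun b => Complex.normSq (M (e.symm b).1 (e.symm b).2))] at h
  simp only [← e.sum_comp, Equiv.symm_apply_apply, Fintype.sum_prod_type] at h
  rw [← (Equiv.arrowProdEquivProdArrow (Fin n) (fun _ => Bool) (fun _ => Bool)).symm.sum_comp] at h
  refine le_trans (le_of_eq ?_) h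
  refine Finset.sum_congr rfl fun p _ => ?_
  congr 1
  unfold ampl
  refine Finset.sum_congr rfl fun s _ => Finset.sum_congr rfl fun u _ => ?_
  congr 1
  simp [e, siteA, mergeFun, pairVec, wiesnerVec, Finset.prod_mul_distrib,
    Equiv.arrowProdEquivProdArrow]

lemma avg_bound {n m : ℕ} (K : Fin m → Matrix (Fin (2 * n) → Bool) (Fin n → Bool) ℂ)
    (hK : ∑ i, (K i)ᴴ * K i = 1) :
    ∑ p : (Fin n → Bool) × (Fin n → Bool), cloneFid K p.1 p.2 ≤ 3 ^ n := by
  have htr : ∑ i, ∑ s, ∑ u, Complex.normSq (K i s u) = 2 ^ n := by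
    have h := congrArg (fun M => (Matrix.trace M)) hK
    simp only [Matrix.trace_sum, Matrix.trace_one] at h
    have h2 : ((∑ i, ∑ s, ∑ u, Complex.normSq (K i s u) : ℝ) : ℂ) = 2 ^ n := by
      refine Eq.trans ?_ (h.trans (by simp))
      push_cast
      refine Finset.sum_congr rfl fun i _ => ?_
      rw [Finset.sum_comm]
      simp only [Matrix.trace, Matrix.diag, Matrix.mul_apply, Matrix.conjTranspose_apply]
      refine Finset.sum_congr rfl fun u _ => Finset.sum_congr rfl fun s _ => ?_
      rw [Complex.normSq_eq_conj_mul_self]; rfl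
    exact_mod_cast h2
  simp only [cloneFid_eq]
  rw [Finset.sum_comm]
  calc _ ≤ ∑ i, (3 / 2 : ℝ) ^ n * ∑ s, ∑ u, Complex.normSq (K i s u) :=
        Finset.sum_le_sum fun i _ => ampl_bound _
    _ = 3 ^ n := by
        rw [← Finset.mul_sum, htr, ← mul_pow]; norm_num

lemma cloneFid_nonneg {n m : ℕ} (K : Fin m → Matrix (Fin (2 * n) → Bool) (Fin n → Bool) ℂ)
    (x θ : Fin n → Bool) : 0 ≤ cloneFid K x θ := by
  rw [cloneFid_eq]
  exact Finset.sum_nonneg fun i _ => Complex.normSq_nonneg _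

lemma exists_good (n : ℕ) (m : ℕ → ℕ)
    (K : ∀ t, Fin (m t) → Matrix (Fin (2 * n) → Bool) (Fin n → Bool) ℂ)
    (hK : ∀ t, ∑ i, (K t i)ᴴ * K t i = 1) :
    ∃ p : (Fin n → Bool) × (Fin n → Bool), ∀ t ≤ n,
      cloneFid (K t) p.1 p.2 ≤ (n + 1) * (3 / 4 : ℝ) ^ n := by
  obtain ⟨p, -, hp⟩ := Finset.exists_le_of_sum_le
    (s := (Finset.univ : Finset ((Fin n → Bool) × (Fin n → Bool))))
    (f := fun p => ∑ t ∈ Finset.range (n + 1), cloneFid (K t) p.1 p.2)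
    (g := fun _ => (n + 1) * (3 / 4 : ℝ) ^ n) Finset.univ_nonempty (by
      rw [Finset.sum_comm]
      refine (Finset.sum_le_sum fun t _ => avg_bound (K t) (hK t)).trans (le_of_eq ?_)
      simp only [Finset.sum_const, Finset.card_range, Finset.card_univ, Fintype.card_prod,
        Fintype.card_fun, Fintype.card_bool, Fintype.card_fin, nsmul_eq_mul]
      push_cast
      rw [← mul_pow, mul_left_comm, ← mul_pow]
      norm_num)
  refine ⟨p, fun t ht => le_trans ?_ hp⟩
  exact Finset.single_le_sum (f := fun t => cloneFid (K t) p.1 p.2)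
    (fun t _ => cloneFid_nonneg _ _ _) (Finset.mem_range.2 (by omega))

lemma negl_aux (c : ℕ) : ∃ N : ℕ, ∀ n ≥ N,
    ((n : ℝ) + 1) * (3 / 4 : ℝ) ^ n ≤ 1 / (n : ℝ) ^ c := by
  have h1 := tendsto_pow_const_mul_const_pow_of_abs_lt_one (c + 1) (r := (3 / 4 : ℝ))
    (by rw [abs_of_pos] <;> norm_num)
  have h2 := tendsto_pow_const_mul_const_pow_of_abs_lt_one c (r := (3 / 4 : ℝ))
    (by rw [abs_of_pos] <;> norm_num)
  have h := (h1.add h2).eventually_le_const (u := (1 : ℝ)) (by norm_num)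
  obtain ⟨N, hN⟩ := Filter.eventually_atTop.1 h
  refine ⟨max N 1, fun n hn => ?_⟩
  have hn0 : (0 : ℝ) < n := by
    have : 1 ≤ n := le_trans (le_max_right _ _) hn
    exact_mod_cast this
  rw [le_div_iff₀ (by positivity)]
  refine le_trans (le_of_eq ?_) (hN n (le_trans (le_max_left _ _) hn))
  ring

/-- For any countable family of cloning channels (each `Φ t n` a
quantum channel from `n` qubits to `2n` qubits, given by Kraus operators), there is
a single fixed sequence of Wiesner states `|x_n^{θ_n}⟩` which every member of the
family fails to clone with more than negligible fidelity. -/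
theorem derandomized_no_cloning (mK : ℕ → ℕ → ℕ)
    (K : ∀ t n : ℕ, Fin (mK t n) → Matrix (Fin (2 * n) → Bool) (Fin n → Bool) ℂ)
    (hK : ∀ t n, ∑ i, (K t n i)ᴴ * K t n i = 1) :
    ∃ x θ : ∀ n : ℕ, Fin n → Bool, ∀ t : ℕ,
      Negligible (fun n => cloneFid (K t n) (x n) (θ n)) := by
  choose p hp using fun n => exists_good n (fun t => mK t n) (fun t => K t n) (fun t => hK t n)
  refine ⟨fun n => (p n).1, fun n => (p n).2, fun t c => ?_⟩
  obtain ⟨N, hN⟩ := negl_aux c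
  exact ⟨max N t, fun n hn => (hp n t (le_trans (le_max_right _ _) hn)).trans
    (hN n (le_trans (le_max_left _ _) hn))⟩
end

section
/- Let n, a_B, a_C ∈ ℕ and let A, B, C be quantum channels, where A maps n qubits to a_B + a_C qubits, B maps n + a_B qubits to n qubits, and C maps a_C + n qubits to n qubits. Then 4^{−n} · Σ_{x∈{0,1}^n} Σ_{θ∈{0,1}^n} (⟨x| ⊗ ⟨x|) (B ⊗ C)(|θ⟩⟨θ| ⊗ A(|x^θ⟩⟨x^θ|) ⊗ |θ⟩⟨θ|) (|x⟩ ⊗ |x⟩) ≤ (1/2 + 1/(2√2))^n < 0.86^n, where B acts on the first copy of |θ⟩⟨θ| together with the first a_B qubits of A's output, and C acts on the remaining a_C qubits of A's output together with the second copy of |θ⟩⟨θ|. In words: for a uniformly random Wiesner state |x^θ⟩, the probability that a splitting channel A followed by two non-communicating parties B and C, each given θ, both output x is at most (1/2 + 1/(2√2))^n. -/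
open scoped Matrix

/-- The winning probability, in the monogamy-of-entanglement game, of the
adversaries given by Kraus families `KA` (splitting channel, `n → aB + aC` qubits),
`KB` (`n + aB → n` qubits) and `KC` (`aC + n → n` qubits), on the Wiesner state
`|x^θ⟩`: the probability `⟨x,x| (B ⊗ C)(|θ⟩⟨θ| ⊗ A(|x^θ⟩⟨x^θ|) ⊗ |θ⟩⟨θ|) |x,x⟩`
that both `B` and `C`, each given `θ` alongside their share of `A`'s output,
output `x`. -/
noncomputable def moeProb {n aB aC mA mB mC : ℕ}
    (KA : Fin mA → Matrix (Fin (aB + aC) → Bool) (Fin n → Bool) ℂ)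
    (KB : Fin mB → Matrix (Fin n → Bool) (Fin (n + aB) → Bool) ℂ)
    (KC : Fin mC → Matrix (Fin n → Bool) (Fin (aC + n) → Bool) ℂ)
    (x θ : Fin n → Bool) : ℝ :=
  -- `σ = A(|x^θ⟩⟨x^θ|)`, the output of the splitting channel
  let σ : Matrix (Fin (aB + aC) → Bool) (Fin (aB + aC) → Bool) ℂ :=
    ∑ i, KA i * wiesnerDM x θ * (KA i)ᴴ
  -- `ρmid = |θ⟩⟨θ| ⊗ σ ⊗ |θ⟩⟨θ|` on `n + aB + (aC + n)` qubits
  let ρmid : Matrix (Fin (n + aB + (aC + n)) → Bool) (Fin (n + aB + (aC + n)) → Bool) ℂ :=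
    fun s s' =>
      (if (fun i : Fin n => s ⟨i.val, by have := i.isLt; omega⟩) = θ then 1 else 0) *
      (if (fun i : Fin n => s' ⟨i.val, by have := i.isLt; omega⟩) = θ then 1 else 0) *
      σ (fun i : Fin (aB + aC) => s ⟨n + i.val, by have := i.isLt; omega⟩)
        (fun i : Fin (aB + aC) => s' ⟨n + i.val, by have := i.isLt; omega⟩) *
      (if (fun i : Fin n => s ⟨n + aB + aC + i.val, by have := i.isLt; omega⟩) = θ then 1 else 0) *
      (if (fun i : Fin n => s' ⟨n + aB + aC + i.val, by have := i.isLt; omega⟩) = θ then 1 else 0)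
  -- the Kraus operators of `B ⊗ C`, from `n + aB + (aC + n)` qubits to `n + n` qubits
  let KBC : Fin mB × Fin mC →
      Matrix (Fin (n + n) → Bool) (Fin (n + aB + (aC + n)) → Bool) ℂ :=
    fun p r col =>
      KB p.1 (fun i => r ⟨i.val, by have := i.isLt; omega⟩)
        (fun j => col ⟨j.val, by have := j.isLt; omega⟩) *
      KC p.2 (fun i => r ⟨n + i.val, by have := i.isLt; omega⟩)
        (fun j => col ⟨n + aB + j.val, by have := j.isLt; omega⟩)
  -- `τ = (B ⊗ C)(ρmid)`
  let τ : Matrix (Fin (n + n) → Bool) (Fin (n + n) → Bool) ℂ :=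
    ∑ p : Fin mB × Fin mC, KBC p * ρmid * (KBC p)ᴴ
  -- the basis string `(x, x)` of length `n + n`
  let xx : Fin (n + n) → Bool := fun i =>
    if h : i.val < n then x ⟨i.val, h⟩ else x ⟨i.val - n, by have := i.isLt; omega⟩
  (τ xx xx).re


lemma cs_complex {ι : Type*} [Fintype ι] (a b : ι → ℂ) :
    ‖∑ i, a i * b i‖ ^ 2 ≤ (∑ i, ‖a i‖ ^ 2) * ∑ i, ‖b i‖ ^ 2 := by
  calc ‖∑ i, a i * b i‖ ^ 2 ≤ (∑ i, ‖a i‖ * ‖b i‖) ^ 2 := by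
        gcongr
        refine (norm_sum_le _ _).trans (le_of_eq ?_)
        simp
    _ ≤ _ := Finset.sum_mul_sq_le_sq_mul_sq _ _ _

lemma star_mul_self_c (z : ℂ) : star z * z = ((‖z‖ ^ 2 : ℝ) : ℂ) := by
  have := Complex.conj_mul' z
  push_cast
  exact this

lemma dual_bound {m n : Type*} [Fintype m] [Fintype n] (M : Matrix m n ℂ) (C : ℝ) (hC : 0 ≤ C)
    (h : ∀ f : n → ℂ, ∑ i, ‖∑ j, M i j * f j‖ ^ 2 ≤ C * ∑ j, ‖f j‖ ^ 2) (g : m → ℂ) :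
    ∑ j, ‖∑ i, star (M i j) * g i‖ ^ 2 ≤ C * ∑ i, ‖g i‖ ^ 2 := by
  set u : n → ℂ := fun j => ∑ i, star (M i j) * g i with hu
  set X : ℝ := ∑ j, ‖u j‖ ^ 2 with hX
  have e1 : ((X : ℝ) : ℂ) = ∑ i, star (∑ j, M i j * u j) * g i := by
    rw [hX]
    push_cast
    have : ∀ j, ((‖u j‖ : ℂ)) ^ 2 = star (u j) * ∑ i, star (M i j) * g i := by
      intro j
      have := star_mul_self_c (u j)
      push_cast at this
      rw [← this]
    simp_rw [this, star_sum, Finset.mul_sum, Finset.sum_mul]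
    rw [Finset.sum_comm]
    refine Finset.sum_congr rfl fun i _ => Finset.sum_congr rfl fun j _ => ?_
    rw [star_mul]; ring
  have hX0 : 0 ≤ X := Finset.sum_nonneg fun _ _ => by positivity
  have hg0 : 0 ≤ ∑ i, ‖g i‖ ^ 2 := Finset.sum_nonneg fun _ _ => by positivity
  have e2 : X ^ 2 ≤ (C * X) * ∑ i, ‖g i‖ ^ 2 := by
    have h1 := cs_complex (fun i => star (∑ j, M i j * u j)) g
    rw [← e1] at h1
    simp only [norm_star] at h1
    have h2 : ‖(X : ℂ)‖ ^ 2 = X ^ 2 := by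
      rw [Complex.norm_real, Real.norm_eq_abs, sq_abs]
    rw [h2] at h1
    exact h1.trans (mul_le_mul_of_nonneg_right (h u) hg0)
  change X ≤ _
  rcases hX0.eq_or_lt with h0 | h0
  · rw [← h0]
    positivity
  · by_contra hcon
    push Not at hcon
    nlinarith

lemma iso_bound {p b : Type*} [Fintype p] [Fintype b] [DecidableEq b] (V : Matrix p b ℂ)
    (hV : ∀ j j', ∑ i, star (V i j) * V i j' = if j = j' then 1 else 0) (f : b → ℂ) :
    ∑ i, ‖∑ j, V i j * f j‖ ^ 2 = ∑ j, ‖f j‖ ^ 2 := by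
  have : ((∑ i, ‖∑ j, V i j * f j‖ ^ 2 : ℝ) : ℂ) = ((∑ j, ‖f j‖ ^ 2 : ℝ) : ℂ) := by
    rw [Complex.ofReal_sum, Complex.ofReal_sum]
    simp_rw [← star_mul_self_c, star_sum, Finset.sum_mul, Finset.mul_sum, star_mul]
    rw [Finset.sum_comm]
    refine Finset.sum_congr rfl fun j _ => ?_
    rw [Finset.sum_comm]
    have : ∀ j', ∑ i, star (f j) * star (V i j) * (V i j' * f j')
        = star (f j) * f j' * ∑ i, star (V i j) * V i j' := by
      intro j'
      rw [Finset.mul_sum]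
      exact Finset.sum_congr rfl fun i _ => by ring
    simp_rw [this, hV]
    simp
  exact_mod_cast this

lemma slice_bound {Y M D : Type*} [Fintype Y] [Fintype M] [Fintype D] [DecidableEq D]
    [DecidableEq Y] (U : Matrix (Y × M) D ℂ)
    (hU : ∀ j j', ∑ i, star (U i j) * U i j' = if j = j' then 1 else 0) (y : Y) (β : M → ℂ) :
    ∑ d, ‖∑ m, star (U (y, m) d) * β m‖ ^ 2 ≤ ∑ m, ‖β m‖ ^ 2 := by
  have := dual_bound U 1 zero_le_one (fun f => by rw [iso_bound U hU, one_mul])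
    (fun p => if p.1 = y then β p.2 else 0)
  simp only [Fintype.sum_prod_type, one_mul] at this
  rw [Finset.sum_eq_single y (by intro z _ hz; simp [hz]) (by simp)] at this
  refine le_trans (le_of_eq ?_) (this.trans (le_of_eq ?_))
  · refine Finset.sum_congr rfl fun d _ => ?_
    rw [Finset.sum_eq_single y (by intro z _ hz; simp [hz]) (by simp)]
    simp
  · simp

lemma cross_bound {X K L S B C : Type*} [Fintype X] [Fintype K] [Fintype L] [Fintype S]
    [Fintype B] [Fintype C] [DecidableEq B] [DecidableEq C] [DecidableEq X]
    (a a' : X → S → ℂ) (V V' : Matrix (X × K) B ℂ) (W W' : Matrix (X × L) C ℂ)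
    (hV : ∀ j j', ∑ i, star (V i j) * V i j' = if j = j' then 1 else 0)
    (hV' : ∀ j j', ∑ i, star (V' i j) * V' i j' = if j = j' then 1 else 0)
    (hW : ∀ j j', ∑ i, star (W i j) * W i j' = if j = j' then 1 else 0)
    (hW' : ∀ j j', ∑ i, star (W' i j) * W' i j' = if j = j' then 1 else 0)
    (c : ℝ) (hc0 : 0 ≤ c) (hc : ∀ x y, ‖∑ s, a x s * star (a' y s)‖ ≤ c)
    (φ φ' : X → K → L → ℂ) :
    ‖∑ s, ∑ b, ∑ d,
      star (∑ x, ∑ k, ∑ l, star (a x s * V (x,k) b * W (x,l) d) * φ x k l) *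
      (∑ x, ∑ k, ∑ l, star (a' x s * V' (x,k) b * W' (x,l) d) * φ' x k l)‖
    ≤ c * (Real.sqrt (∑ x, ∑ k, ∑ l, ‖φ x k l‖ ^ 2) *
      Real.sqrt (∑ x, ∑ k, ∑ l, ‖φ' x k l‖ ^ 2)) := by
  set f : X × L → B → ℂ := fun q b => ∑ k, star (V' (q.1, k) b) * φ' q.1 k q.2 with hf
  set h : X × K → C → ℂ := fun p d => ∑ l, W (p.1, l) d * star (φ p.1 p.2 l) with hh
  have hfb : ∑ q, ∑ b, ‖f q b‖ ^ 2 ≤ ∑ x, ∑ k, ∑ l, ‖φ' x k l‖ ^ 2 := by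
    rw [Fintype.sum_prod_type]
    refine Finset.sum_le_sum fun x _ => ?_
    rw [Finset.sum_comm (f := fun k l => ‖φ' x k l‖ ^ 2)]
    exact Finset.sum_le_sum fun l _ => slice_bound V' hV' x (fun k => φ' x k l)
  have hhb : ∑ p, ∑ d, ‖h p d‖ ^ 2 ≤ ∑ x, ∑ k, ∑ l, ‖φ x k l‖ ^ 2 := by
    rw [Fintype.sum_prod_type]
    refine Finset.sum_le_sum fun x _ => Finset.sum_le_sum fun k _ => ?_
    refine le_trans (le_of_eq ?_) (slice_bound W hW x (fun l => φ x k l))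
    refine Finset.sum_congr rfl fun d _ => ?_
    rw [← norm_star]
    simp [hh, star_sum, mul_comm]
  have key : (∑ s, ∑ b, ∑ d,
      star (∑ x, ∑ k, ∑ l, star (a x s * V (x,k) b * W (x,l) d) * φ x k l) *
      (∑ x, ∑ k, ∑ l, star (a' x s * V' (x,k) b * W' (x,l) d) * φ' x k l))
      = ∑ r : (X × K) × (X × L),
        ((∑ s, a r.1.1 s * star (a' r.2.1 s)) * (∑ b, V r.1 b * f r.2 b)) *
          (∑ d, star (W' r.2 d) * h r.1 d) := by
    have e1 : ∀ s b d, star (∑ x, ∑ k, ∑ l, star (a x s * V (x,k) b * W (x,l) d) * φ x k l)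
        = ∑ p : X × K, a p.1 s * V p b * h p d := by
      intro s b d
      rw [Fintype.sum_prod_type]
      simp only [star_sum, hh, Finset.mul_sum]
      refine Finset.sum_congr rfl fun x _ => Finset.sum_congr rfl fun k _ =>
        Finset.sum_congr rfl fun l _ => ?_
      simp only [star_mul, star_star]; ring
    have e2 : ∀ s b d, (∑ x, ∑ k, ∑ l, star (a' x s * V' (x,k) b * W' (x,l) d) * φ' x k l)
        = ∑ q : X × L, star (a' q.1 s) * f q b * star (W' q d) := by
      intro s b d
      rw [Fintype.sum_prod_type]
      simp only [hf, Finset.mul_sum, Finset.sum_mul]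
      refine Finset.sum_congr rfl fun x _ => ?_
      rw [Finset.sum_comm]
      refine Finset.sum_congr rfl fun k _ =>
        Finset.sum_congr rfl fun l _ => ?_
      simp only [star_mul]; ring
    simp_rw [e1, e2]
    have e3 : ∀ s b d, (∑ p : X × K, a p.1 s * V p b * h p d) *
        (∑ q : X × L, star (a' q.1 s) * f q b * star (W' q d)) =
        ∑ r : (X × K) × (X × L), (a r.1.1 s * star (a' r.2.1 s)) * (V r.1 b * f r.2 b) *
          (star (W' r.2 d) * h r.1 d) := by
      intro s b d
      rw [Finset.sum_mul_sum]
      refine Eq.trans ?_ (Fintype.sum_prod_type _).symm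
      refine Finset.sum_congr rfl fun x _ => Finset.sum_congr rfl fun k _ => ?_
      ring
    simp_rw [e3]
    have e4 : ∀ s b, ∑ d, ∑ r : (X × K) × (X × L),
        (a r.1.1 s * star (a' r.2.1 s)) * (V r.1 b * f r.2 b) * (star (W' r.2 d) * h r.1 d)
        = ∑ r : (X × K) × (X × L), (a r.1.1 s * star (a' r.2.1 s)) * (V r.1 b * f r.2 b) *
           ∑ d, (star (W' r.2 d) * h r.1 d) := by
      intro s b
      rw [Finset.sum_comm]
      simp_rw [Finset.mul_sum]
    simp_rw [e4]
    have e5 : ∀ s, ∑ b, ∑ r : (X × K) × (X × L),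
        (a r.1.1 s * star (a' r.2.1 s)) * (V r.1 b * f r.2 b) *
          ∑ d, (star (W' r.2 d) * h r.1 d)
        = ∑ r : (X × K) × (X × L), (a r.1.1 s * star (a' r.2.1 s)) * (∑ b, V r.1 b * f r.2 b) *
           ∑ d, (star (W' r.2 d) * h r.1 d) := by
      intro s
      rw [Finset.sum_comm]
      refine Finset.sum_congr rfl fun r _ => ?_
      rw [← Finset.sum_mul, ← Finset.mul_sum]
    simp_rw [e5]
    rw [Finset.sum_comm]
    refine Finset.sum_congr rfl fun r _ => ?_
    rw [← Finset.sum_mul, ← Finset.sum_mul]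
  rw [key]
  have hVf : ∑ r : (X × K) × (X × L), ‖∑ b, V r.1 b * f r.2 b‖ ^ 2
      ≤ ∑ x, ∑ k, ∑ l, ‖φ' x k l‖ ^ 2 := by
    rw [Fintype.sum_prod_type, Finset.sum_comm]
    refine le_trans (le_of_eq ?_) hfb
    exact Finset.sum_congr rfl fun q _ => iso_bound V hV (f q)
  have hWh : ∑ r : (X × K) × (X × L), ‖∑ d, star (W' r.2 d) * h r.1 d‖ ^ 2
      ≤ ∑ x, ∑ k, ∑ l, ‖φ x k l‖ ^ 2 := by
    rw [Fintype.sum_prod_type]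
    refine le_trans (le_of_eq ?_) hhb
    refine Finset.sum_congr rfl fun p _ => ?_
    have := iso_bound W' hW' (fun d => star (h p d))
    simp only [norm_star] at this
    rw [← this]
    refine Finset.sum_congr rfl fun q _ => ?_
    rw [← norm_star]
    simp [star_sum, mul_comm]
  have h0 : ∑ r : (X × K) × (X × L),
      ‖(∑ s, a r.1.1 s * star (a' r.2.1 s)) * (∑ b, V r.1 b * f r.2 b)‖ ^ 2
      ≤ c ^ 2 * ∑ x, ∑ k, ∑ l, ‖φ' x k l‖ ^ 2 := by
    refine le_trans ?_ (mul_le_mul_of_nonneg_left hVf (sq_nonneg c))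
    rw [Finset.mul_sum]
    refine Finset.sum_le_sum fun r _ => ?_
    rw [norm_mul, mul_pow]
    gcongr
    exact hc _ _
  have hfin := (cs_complex (fun r : (X × K) × (X × L) =>
    (∑ s, a r.1.1 s * star (a' r.2.1 s)) * (∑ b, V r.1 b * f r.2 b))
    (fun r => ∑ d, star (W' r.2 d) * h r.1 d)).trans
      (mul_le_mul h0 hWh (Finset.sum_nonneg fun _ _ => by positivity) (by positivity))
  refine (pow_le_pow_iff_left₀ (norm_nonneg _) (by positivity) two_ne_zero).1 ?_
  refine hfin.trans (le_of_eq ?_)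
  rw [mul_pow, mul_pow, Real.sq_sqrt (by positivity), Real.sq_sqrt (by positivity)]
  ring

lemma gen_bound {Θ X K L S B C : Type*} [Fintype Θ] [Fintype X] [Fintype K] [Fintype L]
    [Fintype S] [Fintype B] [Fintype C] [DecidableEq B] [DecidableEq C] [DecidableEq X]
    (a : Θ → X → S → ℂ) (V : Θ → Matrix (X × K) B ℂ) (W : Θ → Matrix (X × L) C ℂ)
    (hV : ∀ θ j j', ∑ i, star (V θ i j) * V θ i j' = if j = j' then 1 else 0)
    (hW : ∀ θ j j', ∑ i, star (W θ i j) * W θ i j' = if j = j' then 1 else 0)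
    (c : Θ → Θ → ℝ) (hc0 : ∀ θ θ', 0 ≤ c θ θ') (hcs : ∀ θ θ', c θ θ' = c θ' θ)
    (D : ℝ) (hD0 : 0 ≤ D) (hD : ∀ θ, ∑ θ', c θ θ' = D)
    (hc : ∀ θ θ' x y, ‖∑ s, a θ x s * star (a θ' y s)‖ ≤ c θ θ')
    (ψ : S → B → C → ℂ) :
    ∑ θ, ∑ x, ∑ k, ∑ l,
      ‖∑ s, ∑ b, ∑ d, a θ x s * V θ (x,k) b * W θ (x,l) d * ψ s b d‖ ^ 2
    ≤ D * ∑ s, ∑ b, ∑ d, ‖ψ s b d‖ ^ 2 := by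
  have main := dual_bound (m := S × B × C) (n := Θ × X × K × L)
    (fun p q => star (a q.1 q.2.1 p.1 * V q.1 (q.2.1, q.2.2.1) p.2.1 *
      W q.1 (q.2.1, q.2.2.2) p.2.2)) D hD0 ?_ (fun p => ψ p.1 p.2.1 p.2.2)
  · simpa only [Fintype.sum_prod_type, star_star] using main
  intro φ
  simp only [Fintype.sum_prod_type]
  set u : Θ → S → B → C → ℂ := fun θ s b d => ∑ x, ∑ k, ∑ l,
    star (a θ x s * V θ (x,k) b * W θ (x,l) d) * φ (θ, x, k, l) with hu
  set N : Θ → ℝ := fun θ => ∑ x, ∑ k, ∑ l, ‖φ (θ, x, k, l)‖ ^ 2 with hN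
  have hN0 : ∀ θ, 0 ≤ N θ := fun θ => by positivity
  change ∑ s, ∑ b, ∑ d, ‖∑ θ, u θ s b d‖ ^ 2 ≤ D * ∑ θ, N θ
  have e1 : ((∑ s, ∑ b, ∑ d, ‖∑ θ, u θ s b d‖ ^ 2 : ℝ) : ℂ)
      = ∑ θ, ∑ θ', ∑ s, ∑ b, ∑ d, star (u θ s b d) * u θ' s b d := by
    simp only [Complex.ofReal_sum]
    simp_rw [← star_mul_self_c, star_sum, Finset.sum_mul_sum]
    have r1 : ∀ s b, ∑ d, ∑ θ, ∑ θ', star (u θ s b d) * u θ' s b d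
        = ∑ θ, ∑ θ', ∑ d, star (u θ s b d) * u θ' s b d := by
      intro s b
      rw [Finset.sum_comm]
      exact Finset.sum_congr rfl fun θ _ => Finset.sum_comm
    simp_rw [r1]
    have r2 : ∀ s, ∑ b, ∑ θ, ∑ θ', ∑ d, star (u θ s b d) * u θ' s b d
        = ∑ θ, ∑ θ', ∑ b, ∑ d, star (u θ s b d) * u θ' s b d := by
      intro s
      rw [Finset.sum_comm]
      exact Finset.sum_congr rfl fun θ _ => Finset.sum_comm
    simp_rw [r2]
    rw [Finset.sum_comm]
    exact Finset.sum_congr rfl fun θ _ => Finset.sum_comm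
  have e2 : ∑ s, ∑ b, ∑ d, ‖∑ θ, u θ s b d‖ ^ 2
      = ‖∑ θ, ∑ θ', ∑ s, ∑ b, ∑ d, star (u θ s b d) * u θ' s b d‖ := by
    rw [← e1, Complex.norm_real, Real.norm_eq_abs, abs_of_nonneg (by positivity)]
  rw [e2]
  have e3 : ∀ θ θ', ‖∑ s, ∑ b, ∑ d, star (u θ s b d) * u θ' s b d‖
      ≤ c θ θ' * ((N θ + N θ') / 2) := by
    intro θ θ'
    refine (cross_bound (a θ) (a θ') (V θ) (V θ') (W θ) (W θ') (hV θ) (hV θ') (hW θ) (hW θ')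
      (c θ θ') (hc0 θ θ') (hc θ θ') (fun x k l => φ (θ, x, k, l))
      (fun x k l => φ (θ', x, k, l))).trans ?_
    refine mul_le_mul_of_nonneg_left ?_ (hc0 θ θ')
    change Real.sqrt (N θ) * Real.sqrt (N θ') ≤ _
    nlinarith [sq_nonneg (Real.sqrt (N θ) - Real.sqrt (N θ')), Real.sq_sqrt (hN0 θ),
      Real.sq_sqrt (hN0 θ')]
  calc _ ≤ ∑ θ, ∑ θ', c θ θ' * ((N θ + N θ') / 2) := by
        refine (norm_sum_le _ _).trans (Finset.sum_le_sum fun θ _ => ?_)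
        exact (norm_sum_le _ _).trans (Finset.sum_le_sum fun θ' _ => e3 θ θ')
    _ = (∑ θ, ∑ θ', c θ θ' * N θ) / 2 + (∑ θ, ∑ θ', c θ θ' * N θ') / 2 := by
        simp only [Finset.sum_div, ← Finset.sum_add_distrib]
        refine Finset.sum_congr rfl fun θ _ => Finset.sum_congr rfl fun θ' _ => ?_
        ring
    _ = D * ∑ θ, N θ := by
        rw [Finset.sum_comm (f := fun θ θ' => c θ θ' * N θ')]
        have hD' : ∀ θ, ∑ θ', c θ' θ = D := fun θ => by
          rw [← hD θ]; exact Finset.sum_congr rfl fun θ' _ => hcs _ _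
        simp_rw [← Finset.sum_mul, hD, hD', ← Finset.mul_sum]
        ring

noncomputable def moeC {n : ℕ} (θ θ' : Fin n → Bool) : ℝ :=
  ∏ i, (if θ i = θ' i then 1 else 1 / Real.sqrt 2)

lemma moeC_nonneg {n : ℕ} (θ θ' : Fin n → Bool) : 0 ≤ moeC θ θ' :=
  Finset.prod_nonneg fun i _ => by split_ifs <;> positivity

lemma moeC_symm {n : ℕ} (θ θ' : Fin n → Bool) : moeC θ θ' = moeC θ' θ := by
  unfold moeC
  simp only [eq_comm]

lemma moeC_sum {n : ℕ} (θ : Fin n → Bool) : ∑ θ', moeC θ θ' = (1 + 1 / Real.sqrt 2) ^ n := by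
  have h := Finset.prod_univ_sum (fun _ : Fin n => (Finset.univ : Finset Bool))
    (fun i t => if θ i = t then (1:ℝ) else 1 / Real.sqrt 2)
  rw [Fintype.piFinset_univ] at h
  unfold moeC
  rw [← h]
  have : ∀ i, ∑ t : Bool, (if θ i = t then (1:ℝ) else 1 / Real.sqrt 2) = 1 + 1 / Real.sqrt 2 := by
    intro i
    rw [Fintype.sum_bool]
    cases θ i <;> simp [add_comm]
  simp_rw [this]
  simp

lemma wiesner_overlap {n : ℕ} (θ θ' x y : Fin n → Bool) :
    ‖∑ s, wiesnerVec x θ s * star (wiesnerVec y θ' s)‖ ≤ moeC θ θ' := by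
  have h := Finset.prod_univ_sum (fun _ : Fin n => (Finset.univ : Finset Bool))
    (fun i t => qAmp (x i) (θ i) t * star (qAmp (y i) (θ' i) t))
  rw [Fintype.piFinset_univ] at h
  unfold wiesnerVec moeC
  simp_rw [star_prod, ← Finset.prod_mul_distrib]
  rw [← h, norm_prod]
  refine Finset.prod_le_prod (fun _ _ => norm_nonneg _) fun i _ => ?_
  have h2 : (Real.sqrt 2) * Real.sqrt 2 = 2 := Real.mul_self_sqrt (by norm_num)
  have h3 : ((Real.sqrt 2 : ℝ) : ℂ)⁻¹ * ((Real.sqrt 2 : ℝ) : ℂ)⁻¹ = 1 / 2 := by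
    rw [← mul_inv, ← Complex.ofReal_mul, h2]; norm_num
  rw [Fintype.sum_bool]
  cases x i <;> cases θ i <;> cases y i <;> cases θ' i <;>
    simp [qAmp, h3, abs_of_pos] <;> norm_num

lemma sum_split {n aB aC : ℕ} (F : (Fin (n + aB + (aC + n)) → Bool) → ℂ) :
    ∑ col, F col = ∑ t : Fin n → Bool, ∑ b : Fin aB → Bool, ∑ c : Fin aC → Bool,
      ∑ t' : Fin n → Bool, F (Fin.append (Fin.append t b) (Fin.append c t')) := by
  rw [← (Fin.appendEquiv (α := Bool) (n + aB) (aC + n)).sum_comp, Fintype.sum_prod_type,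
    ← (Fin.appendEquiv (α := Bool) n aB).sum_comp, Fintype.sum_prod_type]
  refine Finset.sum_congr rfl fun t _ => Finset.sum_congr rfl fun b _ => ?_
  rw [← (Fin.appendEquiv (α := Bool) aC n).sum_comp, Fintype.sum_prod_type]
  rfl

lemma quad_entry {R Q I : Type*} [Fintype Q] [Fintype I] (K : Matrix R Q ℂ) (ρ : Matrix Q Q ℂ)
    (ζ : I → Q → ℂ) (h : ∀ s s', ρ s s' = ∑ i, ζ i s * star (ζ i s')) (r : R) :
    (K * ρ * Kᴴ) r r = ∑ i, ((‖∑ q, K r q * ζ i q‖ ^ 2 : ℝ) : ℂ) := by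
  simp_rw [← star_mul_self_c, Matrix.mul_apply, h]
  have hr : ∀ i, star (∑ q, K r q * ζ i q) * (∑ q, K r q * ζ i q)
      = ∑ q', ∑ q, K r q * (ζ i q * star (ζ i q')) * star (K r q') := by
    intro i
    rw [star_sum, Finset.sum_mul_sum]
    refine Finset.sum_congr rfl fun s _ => Finset.sum_congr rfl fun s' _ => ?_
    rw [star_mul]; ring
  simp_rw [hr]
  rw [Finset.sum_comm]
  refine Finset.sum_congr rfl fun s' _ => ?_
  rw [Finset.sum_mul, Finset.sum_comm]
  refine Finset.sum_congr rfl fun s _ => ?_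
  rw [← Finset.sum_mul, ← Finset.mul_sum, Matrix.conjTranspose_apply]

lemma moeProb_eq {n aB aC mA mB mC : ℕ}
    (KA : Fin mA → Matrix (Fin (aB + aC) → Bool) (Fin n → Bool) ℂ)
    (KB : Fin mB → Matrix (Fin n → Bool) (Fin (n + aB) → Bool) ℂ)
    (KC : Fin mC → Matrix (Fin n → Bool) (Fin (aC + n) → Bool) ℂ)
    (x θ : Fin n → Bool) :
    moeProb KA KB KC x θ = ∑ k, ∑ l, ∑ i, ‖∑ s, ∑ b, ∑ c,
      wiesnerVec x θ s * KB k x (Fin.append θ b) * KC l x (Fin.append c θ) *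
        KA i (Fin.append b c) s‖ ^ 2 := by
  let z : Fin mA → (Fin (aB + aC) → Bool) → ℂ := fun i w => ∑ s, KA i w s * wiesnerVec x θ s
  have hσ : ∀ w w', (∑ i, KA i * wiesnerDM x θ * (KA i)ᴴ) w w' = ∑ i, z i w * star (z i w') := by
    intro w w'
    rw [Matrix.sum_apply]
    refine Finset.sum_congr rfl fun i _ => ?_
    simp only [Matrix.mul_apply, Matrix.conjTranspose_apply, wiesnerDM, z, star_sum, star_mul,
      Finset.mul_sum, Finset.sum_mul]
    refine Finset.sum_congr rfl fun s _ => Finset.sum_congr rfl fun s' _ => ?_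
    ring
  let ζ : Fin mA → (Fin (n + aB + (aC + n)) → Bool) → ℂ := fun i s =>
      (if (fun i : Fin n => s ⟨i.val, by have := i.isLt; omega⟩) = θ then 1 else 0) *
      z i (fun i : Fin (aB + aC) => s ⟨n + i.val, by have := i.isLt; omega⟩) *
      (if (fun i : Fin n => s ⟨n + aB + aC + i.val, by have := i.isLt; omega⟩) = θ then 1 else 0)
  let KBC : Fin mB × Fin mC →
      (Fin (n + n) → Bool) → (Fin (n + aB + (aC + n)) → Bool) → ℂ :=
    fun p r col =>
      KB p.1 (fun i => r ⟨i.val, by have := i.isLt; omega⟩)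
        (fun j => col ⟨j.val, by have := j.isLt; omega⟩) *
      KC p.2 (fun i => r ⟨n + i.val, by have := i.isLt; omega⟩)
        (fun j => col ⟨n + aB + j.val, by have := j.isLt; omega⟩)
  let xx : Fin (n + n) → Bool := fun i =>
    if h : i.val < n then x ⟨i.val, h⟩ else x ⟨i.val - n, by have := i.isLt; omega⟩
  have h1 : moeProb KA KB KC x θ
      = (∑ p, ∑ i, ((‖∑ col, KBC p xx col * ζ i col‖ ^ 2 : ℝ) : ℂ)).re := by
    unfold moeProb
    simp only
    congr 1
    rw [Matrix.sum_apply]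
    refine Finset.sum_congr rfl fun p _ => ?_
    refine quad_entry (R := Fin (n + n) → Bool) _ _ ζ (fun s s' => ?_) xx
    simp only [hσ]
    simp only [ζ, star_mul, Finset.mul_sum, Finset.sum_mul]
    refine Finset.sum_congr rfl fun i _ => ?_
    simp only [apply_ite star, star_one, star_zero]
    ring
  have h2 : ∀ k l i, ∑ col, KBC (k, l) xx col * ζ i col = ∑ s, ∑ b, ∑ c,
      wiesnerVec x θ s * KB k x (Fin.append θ b) * KC l x (Fin.append c θ) *
        KA i (Fin.append b c) s := by
    intro k l i
    rw [sum_split]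
    have g1 : (fun i : Fin n => xx ⟨i.val, by have := i.isLt; omega⟩) = x := by
      funext i; simp [xx]
    have g2 : (fun i : Fin n => xx ⟨n + i.val, by have := i.isLt; omega⟩) = x := by
      funext i; simp [xx]
    have g3 : ∀ t b c t', (fun j : Fin (n + aB) =>
        (Fin.append (Fin.append t b) (Fin.append c t') : Fin (n + aB + (aC + n)) → Bool)
          ⟨j.val, by have := j.isLt; omega⟩) = Fin.append t b := by
      intro t b c t'; funext j
      exact Fin.append_left _ _ j
    have g4 : ∀ t b c t', (fun j : Fin (aC + n) =>
        (Fin.append (Fin.append t b) (Fin.append c t') : Fin (n + aB + (aC + n)) → Bool)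
          ⟨n + aB + j.val, by have := j.isLt; omega⟩) = Fin.append c t' := by
      intro t b c t'; funext j
      exact Fin.append_right _ _ j
    have g5 : ∀ t b c t', (fun j : Fin n =>
        (Fin.append (Fin.append t b) (Fin.append c t') : Fin (n + aB + (aC + n)) → Bool)
          ⟨j.val, by have := j.isLt; omega⟩) = t := by
      intro t b c t'; funext j
      refine (Fin.append_left _ _ (Fin.castAdd aB j)).trans ?_
      exact Fin.append_left _ _ j
    have g6 : ∀ t b c t', (fun j : Fin n =>
        (Fin.append (Fin.append t b) (Fin.append c t') : Fin (n + aB + (aC + n)) → Bool)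
          ⟨n + aB + aC + j.val, by have := j.isLt; omega⟩) = t' := by
      intro t b c t'; funext j
      have : (⟨n + aB + aC + j.val, by have := j.isLt; omega⟩ : Fin (n + aB + (aC + n)))
        = Fin.natAdd (n + aB) (Fin.natAdd aC j) := by ext; simp; omega
      rw [this, Fin.append_right, Fin.append_right]
    have g7 : ∀ t b c t', (fun j : Fin (aB + aC) =>
        (Fin.append (Fin.append t b) (Fin.append c t') : Fin (n + aB + (aC + n)) → Bool)
          ⟨n + j.val, by have := j.isLt; omega⟩) = Fin.append b c := by
      intro t b c t'; funext j
      refine Fin.addCases (fun j => ?_) (fun j => ?_) j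
      · have : (⟨n + (Fin.castAdd aC j).val, by have := j.isLt; simp; omega⟩ :
            Fin (n + aB + (aC + n))) = Fin.castAdd (aC + n) (Fin.natAdd n j) := by ext; simp
        rw [this, Fin.append_left, Fin.append_right, Fin.append_left]
      · have : (⟨n + (Fin.natAdd aB j).val, by have := j.isLt; simp; omega⟩ :
            Fin (n + aB + (aC + n))) = Fin.natAdd (n + aB) (Fin.castAdd n j) := by
          ext; simp; omega
        rw [this, Fin.append_right, Fin.append_right, Fin.append_left]
    simp only [KBC, ζ, g1, g2, g3, g4, g5, g6, g7]
    rw [Finset.sum_eq_single θ (by intro t _ ht; simp [ht]) (by simp)]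
    have : ∀ b c, (∑ t' : Fin n → Bool,
        KB k x (Fin.append θ b) * KC l x (Fin.append c t') *
          ((if θ = θ then 1 else 0) * z i (Fin.append b c) * if t' = θ then 1 else 0))
        = ∑ s, wiesnerVec x θ s * KB k x (Fin.append θ b) * KC l x (Fin.append c θ) *
        KA i (Fin.append b c) s := by
      intro b c
      rw [Finset.sum_eq_single θ (by intro t _ ht; simp [ht]) (by simp)]
      simp only [if_true, one_mul, mul_one, z, Finset.mul_sum]
      exact Finset.sum_congr rfl fun s _ => by ring
    refine (Finset.sum_congr rfl fun b _ => Finset.sum_congr rfl fun c _ =>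
      Eq.trans ?_ (this b c)).trans ?_
    · simp
    have sw : ∀ b : Fin aB → Bool, (∑ c : Fin aC → Bool, ∑ s, wiesnerVec x θ s *
        KB k x (Fin.append θ b) * KC l x (Fin.append c θ) * KA i (Fin.append b c) s)
        = ∑ s, ∑ c : Fin aC → Bool, wiesnerVec x θ s *
        KB k x (Fin.append θ b) * KC l x (Fin.append c θ) * KA i (Fin.append b c) s :=
      fun b => Finset.sum_comm
    simp_rw [sw]
    exact Finset.sum_comm
  rw [h1, Fintype.sum_prod_type]
  simp_rw [h2]
  simp only [← Complex.ofReal_sum, Complex.ofReal_re]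


lemma sum_reorder {I T X K L : Type*} [Fintype I] [Fintype T] [Fintype X] [Fintype K] [Fintype L]
    (f : I → T → X → K → L → ℝ) :
    ∑ x, ∑ θ, ∑ k, ∑ l, ∑ i, f i θ x k l = ∑ i, ∑ θ, ∑ x, ∑ k, ∑ l, f i θ x k l := by
  have r1 : ∀ x θ k, ∑ l, ∑ i, f i θ x k l = ∑ i, ∑ l, f i θ x k l :=
    fun x θ k => Finset.sum_comm
  simp_rw [r1]
  have r2 : ∀ x θ, ∑ k, ∑ i, ∑ l, f i θ x k l = ∑ i, ∑ k, ∑ l, f i θ x k l :=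
    fun x θ => Finset.sum_comm
  simp_rw [r2]
  rw [Finset.sum_comm]
  have r3 : ∀ θ, ∑ x, ∑ i, ∑ k, ∑ l, f i θ x k l = ∑ i, ∑ x, ∑ k, ∑ l, f i θ x k l :=
    fun θ => Finset.sum_comm
  simp_rw [r3]
  exact Finset.sum_comm

lemma kraus_entry {m : ℕ} {P Q : Type*} [Fintype P] [Fintype Q] [DecidableEq Q]
    (K : Fin m → Matrix P Q ℂ) (h : ∑ i, (K i)ᴴ * K i = 1) (q q' : Q) :
    ∑ p : P × Fin m, star (K p.2 p.1 q) * K p.2 p.1 q' = if q = q' then 1 else 0 := by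
  have := congrFun (congrFun h q) q'
  rw [Matrix.sum_apply, Matrix.one_apply] at this
  rw [← this, Fintype.sum_prod_type, Finset.sum_comm]
  rfl

/-- the monogamy-of-entanglement bound for Wiesner states: for any
channels `A`, `B`, `C` (given by Kraus families) the average, over uniformly random
`x, θ ∈ {0,1}^n`, of the probability that both `B` and `C` recover `x` is at most
`(1/2 + 1/(2√2))^n`; moreover `1/2 + 1/(2√2) < 0.86`. -/
theorem moe_game_bound (n aB aC mA mB mC : ℕ)
    (KA : Fin mA → Matrix (Fin (aB + aC) → Bool) (Fin n → Bool) ℂ)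
    (KB : Fin mB → Matrix (Fin n → Bool) (Fin (n + aB) → Bool) ℂ)
    (KC : Fin mC → Matrix (Fin n → Bool) (Fin (aC + n) → Bool) ℂ)
    (hKA : ∑ i, (KA i)ᴴ * KA i = 1)
    (hKB : ∑ i, (KB i)ᴴ * KB i = 1)
    (hKC : ∑ i, (KC i)ᴴ * KC i = 1) :
    ((4 : ℝ) ^ n)⁻¹ *
        ∑ x : Fin n → Bool, ∑ θ : Fin n → Bool, moeProb KA KB KC x θ
      ≤ (1 / 2 + 1 / (2 * Real.sqrt 2)) ^ n ∧
    (1 / 2 + 1 / (2 * Real.sqrt 2) : ℝ) < 0.86 := by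
  constructor
  · set D : ℝ := (1 + 1 / Real.sqrt 2) ^ n with hD
    have hD0 : 0 ≤ D := by positivity
    have hper : ∀ i, ∑ θ : Fin n → Bool, ∑ x : Fin n → Bool, ∑ k, ∑ l, ‖∑ s, ∑ b, ∑ c,
        wiesnerVec x θ s * KB k x (Fin.append θ b) * KC l x (Fin.append c θ) *
          KA i (Fin.append b c) s‖ ^ 2
        ≤ D * ∑ s, ∑ b, ∑ c, ‖KA i (Fin.append b c) s‖ ^ 2 := fun i =>
      gen_bound (fun θ x s => wiesnerVec x θ s)
        (fun θ p b => KB p.2 p.1 (Fin.append θ b)) (fun θ p c => KC p.2 p.1 (Fin.append c θ))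
        (fun θ b b' => by
          rw [kraus_entry KB hKB]
          congr 1
          refine propext ⟨fun h => funext fun j => ?_, fun h => by rw [h]⟩
          have := congrFun h (Fin.natAdd _ j)
          simpa only [Fin.append_right] using this)
        (fun θ b b' => by
          rw [kraus_entry KC hKC]
          congr 1
          refine propext ⟨fun h => funext fun j => ?_, fun h => by rw [h]⟩
          have := congrFun h (Fin.castAdd _ j)
          simpa only [Fin.append_left] using this)
        moeC moeC_nonneg moeC_symm D hD0 moeC_sum
        (fun θ θ' x y => wiesner_overlap θ θ' x y) (fun s b c => KA i (Fin.append b c) s)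
    have hnorm : ∑ i, ∑ s, ∑ b : Fin aB → Bool, ∑ c : Fin aC → Bool,
        ‖KA i (Fin.append b c) s‖ ^ 2 = 2 ^ n := by
      have h1 : ∀ i s, ∑ b : Fin aB → Bool, ∑ c : Fin aC → Bool,
          ‖KA i (Fin.append b c) s‖ ^ 2 = ∑ w, ‖KA i w s‖ ^ 2 := by
        intro i s
        rw [← (Fin.appendEquiv (α := Bool) aB aC).sum_comp, Fintype.sum_prod_type]
        rfl
      simp_rw [h1]
      rw [Finset.sum_comm]
      have h2 : ∀ s, ∑ i, ∑ w, ‖KA i w s‖ ^ 2 = 1 := by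
        intro s
        have h3 := kraus_entry KA hKA s s
        rw [if_pos rfl] at h3
        simp_rw [star_mul_self_c, ← Complex.ofReal_sum] at h3
        rw [Fintype.sum_prod_type, Finset.sum_comm] at h3
        exact_mod_cast h3
      simp [h2]
    have htot : ∑ x : Fin n → Bool, ∑ θ : Fin n → Bool, moeProb KA KB KC x θ ≤ D * 2 ^ n := by
      simp_rw [moeProb_eq]
      rw [← hnorm, Finset.mul_sum]
      refine le_trans (le_of_eq ?_) (Finset.sum_le_sum fun i _ => hper i)
      exact sum_reorder (fun i θ x k l => ‖∑ s, ∑ b, ∑ c,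
        wiesnerVec x θ s * KB k x (Fin.append θ b) * KC l x (Fin.append c θ) *
          KA i (Fin.append b c) s‖ ^ 2)
    calc _ ≤ ((4 : ℝ) ^ n)⁻¹ * (D * 2 ^ n) := by gcongr
      _ = _ := by
        rw [hD, ← mul_pow, ← inv_pow, ← mul_pow]
        congr 1
        have : Real.sqrt 2 ≠ 0 := by positivity
        field_simp
        ring
  · have h : (1.4 : ℝ) < Real.sqrt 2 := by
      rw [Real.lt_sqrt (by norm_num)]; norm_num
    have h' : 1 / (2 * Real.sqrt 2) < 1 / (2 * 1.4) := by
      gcongr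
    norm_num at h' ⊢
    linarith
end

section
/- Let ℓ : ℕ → ℕ be a map that is not in O(log), i.e., for every constant C > 0 there are infinitely many n with ℓ(n) > C · log n. Let ℱ be a countable set of sequences μ = (μ_n)_{n∈ℕ}, where μ_n is a subprobability distribution on {0,1}^{ℓ(n)}, and assume ℱ contains the sequence of point masses at the all-zero strings (i.e., the sequence μ⁰ with μ⁰_n(0^{ℓ(n)}) = 1). Call an ℓ-sequence (s_n)_{n∈ℕ} ℱ-ingenerable if there exists a polynomial p such that for every μ ∈ ℱ, μ_n(s_n) < p(n) · 2^{−ℓ(n)} for all sufficiently large n; call it weakly ℱ-ingenerable if there exists a polynomial p such that for every μ ∈ ℱ, μ_n(s_n) < p(n) · 2^{−ℓ(n)} for infinitely many n. Then there exists an ℓ-sequence that is weakly ℱ-ingenerable but not ℱ-ingenerable. -/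
theorem aux_parity (ℓ : ℕ → ℕ)
    (hℓ : ∀ C : ℝ, 0 < C → ∀ N : ℕ, ∃ n ≥ N, C * Real.log n < (ℓ n : ℝ)) :
    ∃ b : ℕ, b < 2 ∧ ∀ C : ℝ, 0 < C → ∀ N : ℕ, ∃ n ≥ N, n % 2 = b ∧ C * Real.log n < (ℓ n : ℝ) := by
  by_contra! h
  obtain ⟨C1, h1, N1, H1⟩ := h 0 (by norm_num)
  obtain ⟨C2, h2, N2, H2⟩ := h 1 (by norm_num)
  obtain ⟨n, hn, hl⟩ := hℓ (C1 + C2) (by positivity) (N1 + N2)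
  have hlog : 0 ≤ Real.log (n : ℝ) := Real.log_natCast_nonneg n
  have m1 := mul_nonneg h1.le hlog
  have m2 := mul_nonneg h2.le hlog
  rcases Nat.mod_two_eq_zero_or_one n with h0 | h0
  · have := H1 n (by omega) h0
    linarith
  · have := H2 n (by omega) h0
    linarith

theorem aux_poly (p : Polynomial ℝ) :
    ∃ N : ℕ, ∀ n ≥ N, p.eval (n : ℝ) ≤ (n : ℝ) ^ (p.natDegree + 1) := by
  have h := Polynomial.div_tendsto_zero_of_degree_lt p (Polynomial.X ^ (p.natDegree + 1)) (by
    rw [Polynomial.degree_X_pow]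
    exact lt_of_le_of_lt Polynomial.degree_le_natDegree (by exact_mod_cast Nat.lt_succ_self _))
  have h' := (h.comp tendsto_natCast_atTop_atTop).eventually (gt_mem_nhds one_pos)
  obtain ⟨N, hN⟩ := Filter.eventually_atTop.1 h'
  refine ⟨N + 1, fun n hn => ?_⟩
  have := hN n (by omega)
  have hpos : (0 : ℝ) < n := by exact_mod_cast (by omega : 0 < n)
  simp only [Function.comp, Polynomial.eval_pow, Polynomial.eval_X] at this
  rw [div_lt_one (by positivity)] at this
  exact this.le

theorem aux_diag (k m : ℕ) (f : ℕ → (Fin k → Bool) → ℝ)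
    (hf : ∀ i, (∀ x, 0 ≤ f i x) ∧ ∑ x, f i x ≤ 1) :
    ∃ x, ∀ i < m, f i x < (m + 1 : ℝ) * ((2 : ℝ) ^ k)⁻¹ := by
  obtain ⟨x, -, hx⟩ := Finset.exists_lt_of_sum_lt
    (s := (Finset.univ : Finset (Fin k → Bool)))
    (f := fun x => ∑ i ∈ Finset.range m, f i x)
    (g := fun _ => (m + 1 : ℝ) * ((2 : ℝ) ^ k)⁻¹) (by
      rw [Finset.sum_comm]
      have h1 : ∑ i ∈ Finset.range m, ∑ x, f i x ≤ ∑ i ∈ Finset.range m, (1 : ℝ) :=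
        Finset.sum_le_sum fun i _ => (hf i).2
      simp only [Finset.sum_const, Finset.card_range, nsmul_eq_mul, mul_one, Finset.card_univ,
        Fintype.card_fun, Fintype.card_bool, Fintype.card_fin] at h1 ⊢
      push_cast
      have : (2 : ℝ) ^ k ≠ 0 := by positivity
      field_simp
      linarith)
  refine ⟨x, fun i hi => lt_of_le_of_lt ?_ hx⟩
  exact Finset.single_le_sum (f := fun i => f i x) (fun j _ => (hf j).1 x) (Finset.mem_range.2 hi)

/-- if `ℓ ∉ O(log)` then, for any countable family `ℱ` of sequences
of subprobability distributions on `{0,1}^{ℓ n}` containing the point masses at the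
all-zero strings, there is an `ℓ`-sequence that is weakly `ℱ`-ingenerable but not
`ℱ`-ingenerable. -/
theorem weakly_ingenerable_not_ingenerable (ℓ : ℕ → ℕ)
    (hℓ : ∀ C : ℝ, 0 < C → ∀ N : ℕ, ∃ n ≥ N, C * Real.log n < (ℓ n : ℝ))
    (ℱ : Set (∀ n : ℕ, (Fin (ℓ n) → Bool) → ℝ))
    (hcount : ℱ.Countable)
    (hsub : ∀ μ ∈ ℱ, ∀ n : ℕ, (∀ x, 0 ≤ μ n x) ∧ ∑ x : Fin (ℓ n) → Bool, μ n x ≤ 1)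
    (hzero : (fun n (x : Fin (ℓ n) → Bool) => if x = (fun _ => false) then (1 : ℝ) else 0) ∈ ℱ) :
    ∃ s : ∀ n : ℕ, Fin (ℓ n) → Bool,
      -- weakly `ℱ`-ingenerable
      (∃ p : Polynomial ℝ, ∀ μ ∈ ℱ, ∀ N : ℕ, ∃ n ≥ N,
        μ n (s n) < p.eval (n : ℝ) * ((2 : ℝ) ^ ℓ n)⁻¹) ∧
      -- but not `ℱ`-ingenerable
      ¬ (∃ p : Polynomial ℝ, ∀ μ ∈ ℱ, ∃ N : ℕ, ∀ n ≥ N,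
        μ n (s n) < p.eval (n : ℝ) * ((2 : ℝ) ^ ℓ n)⁻¹) := by
  obtain ⟨b, hb, hB⟩ := aux_parity ℓ hℓ
  obtain ⟨e, he⟩ := hcount.exists_eq_range ⟨_, hzero⟩
  have hmem : ∀ i, e i ∈ ℱ := fun i => he ▸ Set.mem_range_self i
  choose d hd using fun n => aux_diag (ℓ n) (n + 1) (fun i => e i n) (fun i => hsub _ (hmem i) n)
  refine ⟨fun n => if n % 2 = b then fun _ => false else d n, ⟨Polynomial.X + 2, ?_⟩, ?_⟩
  · intro μ hμ N
    rw [he] at hμ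
    obtain ⟨i, rfl⟩ := hμ
    have : ∃ n ≥ N + i, n % 2 ≠ b := by
      by_cases h : (N + i) % 2 = b
      · exact ⟨N + i + 1, by omega, by omega⟩
      · exact ⟨N + i, le_rfl, h⟩
    obtain ⟨n, hn, hne⟩ := this
    refine ⟨n, by omega, ?_⟩
    have := hd n i (by omega)
    simp only [if_neg hne]
    refine lt_of_lt_of_eq this ?_
    simp only [Polynomial.eval_add, Polynomial.eval_X, Polynomial.eval_ofNat]
    push_cast
    ring
  · rintro ⟨p, hp⟩
    obtain ⟨N, hN⟩ := hp _ hzero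
    obtain ⟨M, hM⟩ := aux_poly p
    have hl2 : 0 < Real.log 2 := Real.log_pos (by norm_num)
    obtain ⟨n, hn, hnb, hlog⟩ := hB ((p.natDegree + 1 : ℕ) / Real.log 2)
      (div_pos (by exact_mod_cast Nat.succ_pos _) hl2) (N + M + 1)
    have h1 := hN n (by omega)
    have h2 := hM n (by omega)
    simp only [if_pos hnb, if_true] at h1
    have hpos : (0 : ℝ) < n := by exact_mod_cast (by omega : 0 < n)
    have h3 : (n : ℝ) ^ (p.natDegree + 1) < 2 ^ ℓ n := by
      rw [← Real.log_lt_log_iff (by positivity) (by positivity), Real.log_pow, Real.log_pow]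
      rwa [div_mul_eq_mul_div, div_lt_iff₀ hl2] at hlog
    rw [← div_eq_mul_inv, lt_div_iff₀ (by positivity)] at h1
    linarith
end
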